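/- arXiv:1604.07267 — 4 statements merged into one kernel-verified Lean document; each statement's English description precedes it below -/
import Mathlib

section
/- Let p be a prime and let G be a finite thin p-group of order at least p². Then G has a non-inner automorphism of order p; that is, there exists a group automorphism φ of G such that φ has order exactly p in Aut(G) and there is no g ∈ G with φ(x) = g⁻¹xg for all x ∈ G. -/
/-- A finite `p`-group is *thin* if every antichain in the lattice of its normal subgroups
contains at most `p + 1` elements. -/
def IsThinPGroup (p : ℕ) (G : Type*) [Group G] : Prop :=
  ∀ S : Set (Subgroup G), (∀ N ∈ S, N.Normal) → IsAntichain (· ≤ ·) S → S.ncard ≤ p + 1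

/-!
Suppose that every automorphism whose order divides `p` is inner. For suitable crossed homomorphisms
`δ`, the map `x ↦ x * δ x` is such an automorphism, so `δ x = ⁅x⁻¹, h⁆` for some `h`: every such `δ`
produces an element of `G` with prescribed commutators.

Thinness enters through the order `p ^ 2` of the noncyclic centers of quotients of `G`; for the
abelianization this says `|G : G'| = p ^ 2`. With `δ x = z ^ χ x`, for `z` central and `χ` a
character, one obtains that `Z(G)` has order `p` and that the center of `G ⧸ Z(G)` is not cyclic.
Writing `γ₃ = [G', G]`, this puts all `p`-th powers into `γ₃` as soon as `γ₃ ≠ 1`.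

* If `p = 2`, squares generate a subgroup containing `G'`, which is not contained in `γ₃`. So
  `γ₃ = 1`, and some `t` of order four has a central square. The map `x ↦ x * t ^ ε x` for the
  character `ε` of `G` that describes commutation with `t` is an automorphism whose square is
  conjugation by `t`; composing it with a conjugation gives an automorphism of order two which is
  inner only if `t` is a commutator, hence central, which is absurd.
* If `p` is odd, there is a noncentral `g` with `g ^ p = 1` that is central modulo `Z(G)`. Let `α`
  be one of two independent characters. The crossed homomorphism `δ x = g ^ α x * z ^ β x` yields
  an `h` whose commutators modulo `Z(G)` are the powers `g ^ α x`; two such elements force the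
  center of `G ⧸ Z(G)` to be generated by `g`, a contradiction. The correction `β` is quadratic in
  `α` if `α` describes commutation with `g`, and otherwise comes from a Heisenberg quotient of
  `G ⧸ γ₃`.
-/

namespace ThinPGroup

open Subgroup
open scoped commutatorElement

/-! ### Powers with exponents in `ZMod p` -/

section ZModPowers

variable {p : ℕ} {G : Type*} [Group G] {x z : G}

theorem zpowers_eq_of_mem_of_card_eq [Fact p.Prime] {H : Subgroup G} (hx : x ∈ H) (hx1 : x ≠ 1)
    (hH : Nat.card H = p) : zpowers x = H := by
  refine le_antisymm (zpowers_le.2 hx) fun y hy ↦ ?_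
  obtain ⟨k, hk⟩ := mem_zpowers_of_prime_card hH (g := ⟨x, hx⟩) (g' := ⟨y, hy⟩)
    fun h ↦ hx1 (congrArg Subtype.val h)
  exact ⟨k, congrArg Subtype.val hk⟩

theorem pow_val_natCast (hz : z ^ p = 1) (n : ℕ) : z ^ (n : ZMod p).val = z ^ n := by
  rw [ZMod.val_natCast, ← pow_eq_pow_mod n hz]

variable [NeZero p]

theorem pow_val_add (hz : z ^ p = 1) (a b : ZMod p) :
    z ^ (a + b).val = z ^ a.val * z ^ b.val := by
  simp [← pow_add, ← pow_val_natCast hz (a.val + b.val)]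

theorem pow_val_mul (hz : z ^ p = 1) (a b : ZMod p) : z ^ (a * b).val = (z ^ a.val) ^ b.val := by
  simp [← pow_mul, ← pow_val_natCast hz (a.val * b.val)]

theorem pow_val_eq_one_iff (hz : orderOf z = p) {a : ZMod p} : z ^ a.val = 1 ↔ a = 0 := by
  simp [← orderOf_dvd_iff_pow_eq_one, hz, ← ZMod.natCast_eq_zero_iff]

theorem pow_val_injective (hz : orderOf z = p) :
    Function.Injective fun a : ZMod p ↦ z ^ a.val := fun a b hab ↦ by
  have hzp : z ^ p = 1 := hz ▸ pow_orderOf_eq_one z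
  rw [← sub_eq_zero, ← pow_val_eq_one_iff hz, ← mul_left_inj (z ^ b.val), ← pow_val_add hzp]
  simpa using hab

theorem exists_pow_val_eq (hz : z ^ p = 1) (hx : x ∈ zpowers z) : ∃ a : ZMod p, z ^ a.val = x := by
  have hfin : IsOfFinOrder z := isOfFinOrder_iff_pow_eq_one.2 ⟨p, NeZero.pos p, hz⟩
  obtain ⟨n, rfl⟩ := (IsOfFinOrder.mem_powers_iff_mem_zpowers hfin).2 hx
  exact ⟨n, pow_val_natCast hz n⟩

end ZModPowers

/-! ### Characters of finite `p`-groups -/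

section Characters

variable {p : ℕ} [Fact p.Prime] {G : Type*} [Group G]

theorem exists_character_of_ne_top [Finite G] (hG : IsPGroup p G) {K : Subgroup G} (hK : K ≠ ⊤) :
    ∃ χ : G →* Multiplicative (ZMod p), Function.Surjective χ ∧ K ≤ χ.ker := by
  have hp : p.Prime := Fact.out
  obtain ⟨n, hn⟩ := IsPGroup.iff_card.1 hG
  obtain ⟨k, hk⟩ := IsPGroup.iff_card.1 (hG.to_subgroup K)
  have hkn : k < n := by
    rw [← Nat.pow_lt_pow_iff_right hp.one_lt, ← hn, ← hk]
    exact lt_of_le_of_ne K.card_le_card_group fun h ↦ hK (K.eq_top_of_card_eq h)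
  obtain ⟨L, hL, hKL⟩ := Sylow.exists_subgroup_card_pow_prime_le p
    (hn ▸ pow_dvd_pow p n.pred_le) K hk (Nat.le_pred_of_lt hkn)
  have hindex : L.index = p := by
    have h := L.card_mul_index
    rw [hL, hn, ← Nat.succ_pred (Nat.ne_zero_of_lt hkn), pow_succ] at h
    exact Nat.eq_of_mul_eq_mul_left (pow_pos hp.pos _) h
  have : L.Normal := normal_of_index_eq_minFac_card <| by
    rw [hindex, hn, hp.pow_minFac (Nat.ne_zero_of_lt hkn)]
  let e : G ⧸ L ≃* Multiplicative (ZMod p) :=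
    mulEquivOfPrimeCardEq (p := p) (by rwa [← index_eq_card]) (by simp)
  refine ⟨e.toMonoidHom.comp (QuotientGroup.mk' L),
    e.surjective.comp (QuotientGroup.mk'_surjective L), fun x hx ↦ ?_⟩
  simpa [MonoidHom.mem_ker] using hKL hx

theorem eq_top_of_sup_commutator_eq_top [Finite G] (hG : IsPGroup p G) {H : Subgroup G}
    (hH : H ⊔ commutator G = ⊤) : H = ⊤ := by
  by_contra hne
  obtain ⟨χ, hχ, hHχ⟩ := exists_character_of_ne_top hG hne
  have htop : χ.ker = ⊤ := top_le_iff.1 <|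
    hH ▸ sup_le hHχ (Abelianization.commutator_subset_ker χ)
  obtain ⟨x, hx⟩ := hχ (Multiplicative.ofAdd 1)
  have : χ x = 1 := χ.mem_ker.1 (htop ▸ mem_top x)
  exact zero_ne_one (α := ZMod p) (this.symm.trans hx)

theorem exists_surjective_prod_of_not_isCyclic [Finite G] (hG : IsPGroup p G)
    (hcyc : ¬ IsCyclic G) {χ : G →* Multiplicative (ZMod p)} (hχ : Function.Surjective χ) :
    ∃ μ : G →* Multiplicative (ZMod p), Function.Surjective (χ.prod μ) := by
  obtain ⟨t, ht⟩ := hχ (Multiplicative.ofAdd 1)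
  obtain ⟨μ, hμ, htμ⟩ := exists_character_of_ne_top hG (K := zpowers t) fun h ↦
    hcyc ⟨t, (eq_top_iff' _).1 h⟩
  have hμt : μ t = 1 := htμ (mem_zpowers t)
  refine ⟨μ, fun ⟨a, b⟩ ↦ ?_⟩
  obtain ⟨m, hm⟩ := hμ b
  refine ⟨t ^ (a / χ m).toAdd.val * m, Prod.ext ?_ (by simp [hm, hμt])⟩
  rw [MonoidHom.prod_apply, map_mul, map_pow, ht, ← ofAdd_nsmul]
  simp

theorem exists_characters_of_not_isCyclic [Finite G] (hG : IsPGroup p G) (hcyc : ¬ IsCyclic G) :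
    ∃ χ μ : G →* Multiplicative (ZMod p), Function.Surjective (χ.prod μ) := by
  have : Nontrivial G := not_subsingleton_iff_nontrivial.1 fun _ ↦ hcyc inferInstance
  obtain ⟨χ, hχ, -⟩ := exists_character_of_ne_top hG (bot_ne_top (α := Subgroup G))
  exact ⟨χ, exists_surjective_prod_of_not_isCyclic hG hcyc hχ⟩

end Characters

section Nilpotent

variable {G : Type*} [Group G]

theorem le_of_le_commutator_top_sup [Group.IsNilpotent G] {A L : Subgroup G} [L.Normal]
    (h : A ≤ ⁅A, (⊤ : Subgroup G)⁆ ⊔ L) : A ≤ L := by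
  let π := QuotientGroup.mk' L
  have hA : A.map π ≤ ⁅A.map π, ⊤⁆ := by
    have := map_mono (f := π) h
    rw [Subgroup.map_sup, map_commutator,
      (Subgroup.map_eq_bot_iff L).2 (QuotientGroup.ker_mk' L).ge, sup_bot_eq] at this
    exact this.trans (commutator_mono le_rfl le_top)
  have key (k : ℕ) : A.map π ≤ (⊤ : Subgroup (G ⧸ L)).lowerCentralSeries k := by
    induction k with
    | zero => exact le_top
    | succ k ih => exact hA.trans (commutator_mono ih le_rfl)
  obtain ⟨n, hn⟩ := Subgroup.nilpotent_iff_lowerCentralSeries.1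
    (inferInstance : Group.IsNilpotent (G ⧸ L))
  have := hn ▸ key n
  rw [le_bot_iff, Subgroup.map_eq_bot_iff, QuotientGroup.ker_mk'] at this
  exact this

end Nilpotent

/-! ### Inner automorphisms of order dividing `p` -/

section Automorphisms

/-- Every automorphism of `G` whose order divides `p` is inner. For a prime `p` it says that
no non-inner automorphism of `G` has order `p`. -/
def InnerOfPowEqOne (p : ℕ) (G : Type*) [Group G] : Prop :=
  ∀ φ : MulAut G, φ ^ p = 1 → φ ∈ (MulAut.conj : G →* MulAut G).range

variable {p : ℕ} {G : Type*} [Group G]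

theorem exists_noninner_mulAut_of_not_innerOfPowEqOne [Fact p.Prime] (hG : ¬ InnerOfPowEqOne p G) :
    ∃ φ : MulAut G, orderOf φ = p ∧ ¬ ∃ g : G, ∀ x : G, φ x = g⁻¹ * x * g := by
  simp only [InnerOfPowEqOne, not_forall] at hG
  obtain ⟨φ, hφp, hφ⟩ := hG
  refine ⟨φ, orderOf_eq_prime hφp fun h ↦ hφ (h ▸ one_mem _), fun ⟨g, hg⟩ ↦ hφ ⟨g⁻¹, ?_⟩⟩
  ext x
  simp [hg]

/-- The automorphism `x ↦ x * δ x` attached to a crossed homomorphism `δ` that is trivial on its own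
values. -/
def crossedMulAut (δ : G → G) (hmul : ∀ x y, δ (x * y) = y⁻¹ * δ x * y * δ y)
    (hδ : ∀ x, δ (δ x) = 1) : MulAut G :=
  let f : G →* G := MonoidHom.mk' (fun x ↦ x * δ x) fun x y ↦ by simp [hmul, mul_assoc]
  have hf (x : G) : f (δ x) = δ x := by simp [f, hδ]
  { f with
    invFun := fun x ↦ x * (δ x)⁻¹
    left_inv := fun x ↦ by simp [f, hmul, hδ]
    right_inv := fun x ↦ by
      change f (x * (δ x)⁻¹) = x
      rw [map_mul, map_inv, hf]
      exact mul_inv_cancel_right x (δ x) }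

theorem crossedMulAut_pow_apply {δ : G → G} (hmul : ∀ x y, δ (x * y) = y⁻¹ * δ x * y * δ y)
    (hδ : ∀ x, δ (δ x) = 1) (n : ℕ) (x : G) : (crossedMulAut δ hmul hδ ^ n) x = x * δ x ^ n := by
  have happly (x : G) : crossedMulAut δ hmul hδ x = x * δ x := rfl
  induction n with
  | zero => simp
  | succ n ih =>
    rw [pow_succ', MulAut.mul_apply, ih, map_mul, map_pow, happly (δ x), hδ, mul_one, happly,
      mul_assoc, ← pow_succ']

theorem InnerOfPowEqOne.exists_commutator_eq (hG : InnerOfPowEqOne p G) {δ : G → G}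
    (hmul : ∀ x y, δ (x * y) = y⁻¹ * δ x * y * δ y) (hδ : ∀ x, δ (δ x) = 1)
    (hpow : ∀ x, δ x ^ p = 1) : ∃ h : G, ∀ x, ⁅x⁻¹, h⁆ = δ x := by
  obtain ⟨h, hh⟩ := hG (crossedMulAut δ hmul hδ) (by ext x; simp [crossedMulAut_pow_apply, hpow])
  refine ⟨h, fun x ↦ ?_⟩
  have hx : h * x * h⁻¹ = x * δ x := DFunLike.congr_fun hh x
  rw [commutatorElement_def, inv_inv, mul_assoc, mul_assoc, ← mul_assoc h, hx, inv_mul_cancel_left]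

end Automorphisms

/-! ### Commutation with an element that is central modulo `⟨z⟩` -/

section CommutatorCharacter

variable {p : ℕ} [Fact p.Prime] {G : Type*} [Group G] {z g : G}

/-- Commutation with `g` is the character `χ` of `G`, once the powers of `z` are identified with
`ZMod p`. -/
def IsCommutatorCharacter (z g : G) (χ : G →* Multiplicative (ZMod p)) : Prop :=
  ∀ x, ⁅g, x⁆ = z ^ (χ x).toAdd.val

theorem IsCommutatorCharacter.apply_self (hzp : orderOf z = p)
    {χ : G →* Multiplicative (ZMod p)} (hχ : IsCommutatorCharacter z g χ) : χ g = 1 := by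
  rw [← toAdd_eq_zero, ← pow_val_eq_one_iff hzp, ← hχ, commutatorElement_self]

theorem IsCommutatorCharacter.surjective {χ : G →* Multiplicative (ZMod p)}
    (hχ : IsCommutatorCharacter z g χ) (hg : g ∉ center G) : Function.Surjective χ := by
  have : Fact (Nat.card (Multiplicative (ZMod p))).Prime := by simpa using ‹Fact p.Prime›
  refine MonoidHom.range_eq_top.1 ((eq_bot_or_eq_top_of_prime_card χ.range).resolve_left fun h ↦ ?_)
  obtain rfl := MonoidHom.range_eq_bot_iff.1 h
  exact hg (mem_center_iff.2 fun x ↦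
    (commutatorElement_eq_one_iff_mul_comm.1 (by simpa using hχ x)).symm)

theorem exists_isCommutatorCharacter (hz : z ∈ center G) (hzp : orderOf z = p)
    (hg : ∀ x, ⁅g, x⁆ ∈ zpowers z) :
    ∃ χ : G →* Multiplicative (ZMod p), IsCommutatorCharacter z g χ := by
  have hzpow : z ^ p = 1 := hzp ▸ pow_orderOf_eq_one z
  choose a ha using fun x ↦ exists_pow_val_eq hzpow (hg x)
  refine ⟨MonoidHom.mk' (fun x ↦ Multiplicative.ofAdd (a x)) fun x y ↦ ?_, fun x ↦ (ha x).symm⟩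
  refine congrArg Multiplicative.ofAdd (pow_val_injective hzp ?_)
  have hcomm : Commute x (z ^ (a y).val) := (mem_center_iff.1 (pow_mem hz _) x)
  change z ^ (a (x * y)).val = z ^ (a x + a y).val
  rw [pow_val_add hzpow, ha, ha, commutatorElement_mul_right_eq_mul_conj, ← ha y, mul_assoc _ x,
    hcomm.eq, ← mul_assoc, mul_inv_cancel_right]

theorem InnerOfPowEqOne.exists_isCommutatorCharacter (hG : InnerOfPowEqOne p G)
    (hz : z ∈ center G) (hzp : z ^ p = 1) {χ : G →* Multiplicative (ZMod p)} (hχz : χ z = 1) :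
    ∃ w : G, IsCommutatorCharacter z w χ := by
  have hcomm (n : ℕ) (y : G) : Commute (z ^ n) y := (mem_center_iff.1 (pow_mem hz n) y).symm
  obtain ⟨w, hw⟩ := hG.exists_commutator_eq (δ := fun x ↦ z ^ (χ x).toAdd.val)
    (fun x y ↦ by
      rw [map_mul, toAdd_mul, pow_val_add hzp, ← (hcomm _ _).inv_right.eq, inv_mul_cancel_right])
    (fun x ↦ by simp [hχz])
    (fun x ↦ by rw [pow_right_comm, hzp, one_pow])
  refine ⟨w, fun x ↦ ?_⟩
  have := hw x⁻¹
  rw [inv_inv, ← commutatorElement_inv, map_inv, toAdd_inv] at this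
  rw [← inv_inj, this, eq_inv_iff_mul_eq_one, ← pow_val_add hzp]
  simp

theorem IsCommutatorCharacter.inv_mul_pow_val_mul (hz : z ∈ center G) (hzp : z ^ p = 1)
    {χ : G →* Multiplicative (ZMod p)} (hχ : IsCommutatorCharacter z g χ) (a : ZMod p) (y : G) :
    y⁻¹ * g ^ a.val * y = g ^ a.val * z ^ (a * (χ y).toAdd).val := by
  have hcomm (y : G) : Commute y (z ^ (χ y).toAdd.val) := mem_center_iff.1 (pow_mem hz _) y
  have hgz : Commute g (z ^ (χ y).toAdd.val) := mem_center_iff.1 (pow_mem hz _) g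
  have hgy : y⁻¹ * g * y = g * z ^ (χ y).toAdd.val := by
    rw [mul_assoc, inv_mul_eq_iff_eq_mul, hgz.eq, ← mul_assoc, (hcomm y).eq, mul_assoc,
      ← eq_mul_inv_iff_mul_eq, ← hχ y]
    simp [commutatorElement_def, mul_assoc]
  have hconj := conj_pow (i := a.val) (a := y⁻¹) (b := g)
  rw [inv_inv, hgy, hgz.mul_pow, ← pow_val_mul hzp, mul_comm _ a] at hconj
  exact hconj.symm

theorem InnerOfPowEqOne.exists_commutator_eq_pow_mul_pow (hG : InnerOfPowEqOne p G)
    (hz : z ∈ center G) (hzp : z ^ p = 1) (hgp : g ^ p = 1)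
    {χ α : G →* Multiplicative (ZMod p)} (hχ : IsCommutatorCharacter z g χ)
    {β : G → ZMod p} (hβ : ∀ x y, β (x * y) = β x + β y + (α x).toAdd * (χ y).toAdd)
    (hαz : α z = 1) (hαg : α g = 1) (hβz : β z = 0) (hβg : β g = 0) :
    ∃ h : G, ∀ x, ⁅x⁻¹, h⁆ = g ^ (α x).toAdd.val * z ^ (β x).val := by
  have hcomm (a : ZMod p) (y : G) : Commute (z ^ a.val) y :=
    (mem_center_iff.1 (pow_mem hz _) y).symm
  let K : Submonoid G :=
    { carrier := {x | α x = 1 ∧ β x = 0}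
      one_mem' := ⟨map_one α, by simpa using hβ 1 1⟩
      mul_mem' := fun {x y} hx hy ↦ ⟨by simp [hx.1, hy.1], by simp [hβ, hx.1, hx.2, hy.2]⟩ }
  refine hG.exists_commutator_eq (fun x y ↦ ?_) (fun x ↦ ?_) fun x ↦ ?_
  · have hconj := hχ.inv_mul_pow_val_mul hz hzp (α x).toAdd y
    symm
    calc y⁻¹ * (g ^ (α x).toAdd.val * z ^ (β x).val) * y * (g ^ (α y).toAdd.val * z ^ (β y).val)
        = y⁻¹ * g ^ (α x).toAdd.val * (z ^ (β x).val * y) * g ^ (α y).toAdd.val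
            * z ^ (β y).val := by
          simp only [mul_assoc]
      _ = (y⁻¹ * g ^ (α x).toAdd.val * y) * (z ^ (β x).val * g ^ (α y).toAdd.val)
            * z ^ (β y).val := by
          rw [(hcomm (β x) y).eq]; simp only [mul_assoc]
      _ = g ^ (α x).toAdd.val * (z ^ ((α x).toAdd * (χ y).toAdd).val * g ^ (α y).toAdd.val)
            * (z ^ (β x).val * z ^ (β y).val) := by
          rw [hconj, (hcomm (β x) _).eq]; simp only [mul_assoc]
      _ = g ^ (α (x * y)).toAdd.val * z ^ (β (x * y)).val := by
          rw [(hcomm _ (g ^ _)).eq, hβ, add_comm, map_mul, toAdd_mul, pow_val_add hgp,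
            pow_val_add hzp, pow_val_add hzp]
          simp only [mul_assoc]
  · have hx : g ^ (α x).toAdd.val * z ^ (β x).val ∈ K :=
      mul_mem (pow_mem (show g ∈ K from ⟨hαg, hβg⟩) _) (pow_mem (show z ∈ K from ⟨hαz, hβz⟩) _)
    simp [hx.1, hx.2]
  · rw [(hcomm _ _).symm.mul_pow, pow_right_comm, hgp, pow_right_comm, hzp]
    simp

end CommutatorCharacter

/-! ### The preimage of the center of a quotient -/

section UpperCentralSeriesStep

variable {G : Type*} [Group G] (N : Subgroup G) [N.Normal]

/-- The projection of the preimage of `center (G ⧸ N)` onto `center (G ⧸ N)`. -/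
def toCenterQuotient : N.upperCentralSeriesStep →* center (G ⧸ N) :=
  ((QuotientGroup.mk' N).comp N.upperCentralSeriesStep.subtype).codRestrict _ fun x ↦
    N.upperCentralSeriesStep_eq_comap_center.le x.2

theorem toCenterQuotient_surjective : Function.Surjective (toCenterQuotient N) := fun ⟨y, hy⟩ ↦ by
  obtain ⟨x, rfl⟩ := QuotientGroup.mk'_surjective N y
  exact ⟨⟨x, N.upperCentralSeriesStep_eq_comap_center.ge hy⟩, rfl⟩

theorem ker_toCenterQuotient :
    (toCenterQuotient N).ker = N.subgroupOf N.upperCentralSeriesStep := by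
  ext x
  rw [MonoidHom.mem_ker, mem_subgroupOf, Subtype.ext_iff]
  exact QuotientGroup.eq_one_iff (x : G)

theorem le_upperCentralSeriesStep : N ≤ N.upperCentralSeriesStep := fun x hx y ↦ by
  exact commutator_le_left N ⊤ (commutator_mem_commutator hx (mem_top y))

theorem center_le_upperCentralSeriesStep : center G ≤ N.upperCentralSeriesStep := fun x hx y ↦ by
  rw [commutatorElement_eq_one_iff_mul_comm.2 (mem_center_iff.1 hx y).symm]
  exact N.one_mem

theorem card_upperCentralSeriesStep :
    Nat.card N.upperCentralSeriesStep = Nat.card N * Nat.card (center (G ⧸ N)) := by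
  rw [← (toCenterQuotient N).ker.card_mul_index, index_ker,
    MonoidHom.range_eq_top.2 (toCenterQuotient_surjective N), card_top, ker_toCenterQuotient,
    Nat.card_congr (subgroupOfEquivOfLe (le_upperCentralSeriesStep N)).toEquiv]

variable {N}

/-- Commutation with `t` on the preimage of `center (G ⧸ N)`; it is a homomorphism because `N` is
central. -/
def commutatorHom (hN : N ≤ center G) (t : G) : N.upperCentralSeriesStep →* N :=
  MonoidHom.mk' (fun v ↦ ⟨⁅(v : G), t⁆, v.2 t⟩) fun v w ↦ Subtype.ext <| by
    have hw : v * ⁅(w : G), t⁆ = ⁅(w : G), t⁆ * v := mem_center_iff.1 (hN (w.2 t)) v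
    have hv : ⁅(v : G), t⁆ * ⁅(w : G), t⁆ = ⁅(w : G), t⁆ * ⁅(v : G), t⁆ :=
      mem_center_iff.1 (hN (w.2 t)) _
    change ⁅(v * w : G), t⁆ = ⁅(v : G), t⁆ * ⁅(w : G), t⁆
    rw [commutatorElement_mul_left_eq_conj_mul, hw, mul_inv_cancel_right, hv]

theorem commutatorHom_eq_one_of_mem_center (hN : N ≤ center G) (t : G)
    {v : N.upperCentralSeriesStep} (hv : (v : G) ∈ center G) : commutatorHom hN t v = 1 :=
  Subtype.ext (commutatorElement_eq_one_iff_mul_comm.2 (mem_center_iff.1 hv t).symm)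

end UpperCentralSeriesStep

/-! ### Centrally thin groups -/

section CentrallyThin

/-- A weak form of thinness: every noncyclic center of a quotient of `G` has order `p ^ 2`. -/
def IsCentrallyThin (p : ℕ) (G : Type*) [Group G] : Prop :=
  ∀ (N : Subgroup G) [N.Normal], ¬ IsCyclic (center (G ⧸ N)) → Nat.card (center (G ⧸ N)) = p ^ 2

variable {p : ℕ} {G Q : Type*} [Group G] [Group Q]

theorem IsCentrallyThin.of_surjective (hG : IsCentrallyThin p G) {f : G →* Q}
    (hf : Function.Surjective f) : IsCentrallyThin p Q := fun N _ hN ↦ by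
  let e := centerCongr (QuotientGroup.quotientKerEquivOfSurjective ((QuotientGroup.mk' N).comp f)
    ((QuotientGroup.mk'_surjective N).comp hf))
  rw [← Nat.card_congr e.toEquiv]
  exact hG _ fun h ↦ hN (isCyclic_of_surjective e e.surjective)

variable [Fact p.Prime] [Finite G]

theorem isCyclic_of_isCyclic_quotient_commutator (hG : IsPGroup p G)
    (h : IsCyclic (G ⧸ commutator G)) : IsCyclic G := by
  obtain ⟨y, hy⟩ := h
  obtain ⟨x, rfl⟩ := QuotientGroup.mk'_surjective _ y
  refine ⟨x, (eq_top_iff' (zpowers x)).1 <|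
    eq_top_of_sup_commutator_eq_top hG ((eq_top_iff' _).2 fun u ↦ ?_)⟩
  obtain ⟨k, hk⟩ := hy u
  have hmem : (x ^ k)⁻¹ * u ∈ commutator G := QuotientGroup.eq.1 hk
  exact mul_inv_cancel_left (x ^ k) u ▸ mul_mem_sup ⟨k, rfl⟩ hmem

theorem IsCentrallyThin.index_commutator (hG : IsCentrallyThin p G) (hpG : IsPGroup p G)
    (hcyc : ¬ IsCyclic G) : (commutator G).index = p ^ 2 := by
  have htop : center (G ⧸ commutator G) = ⊤ := CommGroup.center_eq_top (G := Abelianization G)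
  rw [index_eq_card, ← card_top, ← htop]
  refine hG _ fun h ↦ hcyc (isCyclic_of_isCyclic_quotient_commutator hpG ?_)
  rw [htop] at h
  exact isCyclic_of_surjective topEquiv topEquiv.surjective

end CentrallyThin

section IndependentCommutatorCharacters

variable {p : ℕ} [Fact p.Prime] {G : Type*} [Group G] {z w w' : G} [(zpowers z).Normal]
  {χ μ : G →* Multiplicative (ZMod p)}

theorem exists_commutatorHom_prod_surjective (hz : zpowers z ≤ center G) (hzp : orderOf z = p)
    (hχ : IsCommutatorCharacter z w χ) (hμ : IsCommutatorCharacter z w' μ)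
    (hχμ : Function.Surjective (χ.prod μ)) :
    ∃ t m, Function.Surjective ((commutatorHom hz t).prod (commutatorHom hz m)) := by
  obtain ⟨t, ht⟩ := hχμ (.ofAdd 1, 1)
  obtain ⟨m, hm⟩ := hχμ (1, .ofAdd 1)
  simp only [MonoidHom.prod_apply, Prod.mk.injEq] at ht hm
  have hw {v : G} {ψ : G →* Multiplicative (ZMod p)} (hv : IsCommutatorCharacter z v ψ) :
      v ∈ (zpowers z).upperCentralSeriesStep := fun x ↦ hv x ▸ npow_mem_zpowers z _
  have hzone : z ^ (1 : ZMod p).val = z := by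
    simpa using pow_val_natCast (hzp ▸ pow_orderOf_eq_one z : z ^ p = 1) 1
  refine ⟨t, m, fun ⟨⟨_, i, rfl⟩, ⟨_, j, rfl⟩⟩ ↦ ⟨⟨w, hw hχ⟩ ^ i * ⟨w', hw hμ⟩ ^ j, ?_⟩⟩
  have hcomm (x : G) {v : G} (hv : v ∈ (zpowers z).upperCentralSeriesStep) :
    (commutatorHom hz x ⟨v, hv⟩ : G) = ⁅v, x⁆ := rfl
  ext <;> simp [hcomm, hχ _, hμ _, ht, hm, hzone]

theorem not_isCyclic_center_quotient (hz : zpowers z ≤ center G) (hzp : orderOf z = p)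
    (hχ : IsCommutatorCharacter z w χ) (hμ : IsCommutatorCharacter z w' μ)
    (hχμ : Function.Surjective (χ.prod μ)) : ¬ IsCyclic (center (G ⧸ zpowers z)) := by
  obtain ⟨t, m, hE⟩ := exists_commutatorHom_prod_surjective hz hzp hχ hμ hχμ
  set E := (commutatorHom hz t).prod (commutatorHom hz m)
  have hker : (toCenterQuotient (zpowers z)).ker ≤ E.ker := by
    rw [ker_toCenterQuotient]
    intro v hv
    simp [E, MonoidHom.mem_ker, commutatorHom_eq_one_of_mem_center hz _ (hz hv)]
  intro hcyc
  let F := (toCenterQuotient (zpowers z)).liftOfSurjective (toCenterQuotient_surjective _) ⟨E, hker⟩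
  have hF : Function.Surjective F := fun y ↦ by
    obtain ⟨v, rfl⟩ := hE y
    exact ⟨toCenterQuotient (zpowers z) v, MonoidHom.liftOfRightInverse_comp_apply ..⟩
  have := (Group.isCyclic_prod_iff.1 (isCyclic_of_surjective F hF)).2.2
  rw [Nat.card_zpowers, hzp, Nat.coprime_self] at this
  exact (Fact.out : p.Prime).ne_one this

theorem center_eq_zpowers [Finite G] (hG : IsCentrallyThin p G) (hz : zpowers z ≤ center G)
    (hzp : orderOf z = p) (hχ : IsCommutatorCharacter z w χ) (hμ : IsCommutatorCharacter z w' μ)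
    (hχμ : Function.Surjective (χ.prod μ)) : center G = zpowers z := by
  have hp : p.Prime := Fact.out
  obtain ⟨t, m, hE⟩ := exists_commutatorHom_prod_surjective hz hzp hχ hμ hχμ
  set E := (commutatorHom hz t).prod (commutatorHom hz m)
  have hcard : Nat.card E.ker = p := by
    have h := E.ker.card_mul_index
    rw [index_ker, MonoidHom.range_eq_top.2 hE, card_top, Nat.card_prod, Nat.card_zpowers, hzp,
      card_upperCentralSeriesStep, hG _ (not_isCyclic_center_quotient hz hzp hχ hμ hχμ),
      Nat.card_zpowers, hzp, sq] at h
    exact Nat.eq_of_mul_eq_mul_right (mul_pos hp.pos hp.pos) h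
  have hcenter : center G ≤ E.ker.map (Subgroup.subtype _) := fun x hx ↦ by
    let v : (zpowers z).upperCentralSeriesStep := ⟨x, center_le_upperCentralSeriesStep _ hx⟩
    have hv (y : G) : commutatorHom hz y v = 1 := commutatorHom_eq_one_of_mem_center hz y hx
    exact ⟨v, by simp [E, MonoidHom.mem_ker, hv], rfl⟩
  refine (eq_of_le_of_card_ge hz ?_).symm
  calc Nat.card (center G) ≤ Nat.card (E.ker.map (Subgroup.subtype _)) := card_le_of_le hcenter
    _ = Nat.card (zpowers z) := by
      rw [card_map_of_injective (subtype_injective _), hcard, Nat.card_zpowers, hzp]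

end IndependentCommutatorCharacters

/-! ### The first two factors of the lower central series -/

section LowerCentralFactors

variable {G : Type*} [Group G]

theorem normal_of_le_center {N : Subgroup G} (hN : N ≤ center G) : N.Normal :=
  ⟨fun x hx y ↦ by rwa [mem_center_iff.1 (hN hx) y, mul_inv_cancel_right]⟩

theorem commutator_le_of_closure_eq_top {S : Set G} (hS : closure S = ⊤) {N : Subgroup G}
    [N.Normal] (hN : ∀ x ∈ S, ∀ y ∈ S, ⁅x, y⁆ ∈ N) : commutator G ≤ N := by
  rw [← Normal.quotient_commutative_iff_commutator_le]
  have htop : closure (QuotientGroup.mk' N '' S) = ⊤ := by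
    rw [← MonoidHom.map_closure, hS, ← MonoidHom.range_eq_map, QuotientGroup.range_mk']
  have hcomm : IsMulCommutative (closure (QuotientGroup.mk' N '' S)) :=
    isMulCommutative_closure <| by
      rintro _ ⟨x, hx, rfl⟩ _ ⟨y, hy, rfl⟩
      rw [← commutatorElement_eq_one_iff_mul_comm, ← map_commutatorElement]
      exact (QuotientGroup.eq_one_iff _).2 (hN x hx y hy)
  rw [htop] at hcomm
  exact ⟨⟨fun x y ↦ congrArg Subtype.val (hcomm.is_comm.comm ⟨x, mem_top x⟩ ⟨y, mem_top y⟩)⟩⟩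

theorem upperCentralSeriesStep_eq_commutator {p : ℕ} [Fact p.Prime]
    (hindex : (commutator G).index = p ^ 2) {N : Subgroup G} [N.Normal]
    (hN : ⁅commutator G, (⊤ : Subgroup G)⁆ ≤ N) (hGN : ¬ commutator G ≤ N) :
    N.upperCentralSeriesStep = commutator G := by
  have hp : p.Prime := Fact.out
  set V := N.upperCentralSeriesStep
  have hle : commutator G ≤ V := fun x hx y ↦ hN (commutator_mem_commutator hx (mem_top y))
  have hnormal : V.Normal := by
    rw [show V = _ from N.upperCentralSeriesStep_eq_comap_center]
    infer_instance
  have hcyc : ¬ IsCyclic (G ⧸ V) := fun hcyc ↦ hGN <| by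
    rw [← Normal.quotient_commutative_iff_commutator_le]
    let f : G ⧸ N →* G ⧸ V :=
      QuotientGroup.map N V (MonoidHom.id G) (le_upperCentralSeriesStep N)
    refine f.isMulCommutative_of_isCyclic_of_ker_le_center ?_
    rintro ⟨x⟩ hx
    exact N.upperCentralSeriesStep_eq_comap_center.le ((QuotientGroup.eq_one_iff x).1 hx)
  obtain ⟨k, hk, hVk⟩ := (Nat.dvd_prime_pow hp).1 (hindex ▸ index_dvd_of_le hle)
  have hk2 : k = 2 := by
    by_contra hne
    refine hcyc (isCyclic_of_card_dvd_prime (p := p) ?_)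
    rw [← index_eq_card, hVk]
    exact (pow_dvd_pow p (show k ≤ 1 by lia)).trans (pow_one p).dvd
  have hrel : (commutator G).relIndex V = 1 := by
    have := relIndex_mul_index hle
    rw [hVk, hk2, hindex] at this
    exact Nat.eq_of_mul_eq_mul_right (pow_pos hp.pos 2) (by rw [this, one_mul])
  exact le_antisymm (relIndex_eq_one.1 hrel) hle

end LowerCentralFactors

section Heisenberg

variable {p : ℕ} [Fact p.Prime] {G : Type*} [Group G] {χ μ : G →* Multiplicative (ZMod p)}

theorem ker_prod_eq_commutator (hindex : (commutator G).index = p ^ 2)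
    (hχμ : Function.Surjective (χ.prod μ)) : (χ.prod μ).ker = commutator G := by
  have hp : p.Prime := Fact.out
  have hle : commutator G ≤ (χ.prod μ).ker := Abelianization.commutator_subset_ker _
  refine le_antisymm (relIndex_eq_one.1 ?_) hle
  have := relIndex_mul_index hle
  rw [index_ker, MonoidHom.range_eq_top.2 hχμ, hindex, card_top, Nat.card_prod,
    Nat.card_congr Multiplicative.toAdd, Nat.card_zmod, ← sq] at this
  exact Nat.eq_of_mul_eq_mul_right (pow_pos hp.pos 2) (by rw [this, one_mul])

theorem exists_eq_pow_mul_pow_mul (hindex : (commutator G).index = p ^ 2)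
    (hχμ : Function.Surjective (χ.prod μ)) {t m : G} (ht : χ.prod μ t = (.ofAdd 1, 1))
    (hm : χ.prod μ m = (1, .ofAdd 1)) (x : G) :
    ∃ y ∈ commutator G, x = t ^ (χ x).toAdd.val * m ^ (μ x).toAdd.val * y := by
  refine ⟨(t ^ (χ x).toAdd.val * m ^ (μ x).toAdd.val)⁻¹ * x, ?_, (mul_inv_cancel_left _ _).symm⟩
  rw [← ker_prod_eq_commutator hindex hχμ, MonoidHom.mem_ker, map_mul, map_inv, map_mul, map_pow,
    map_pow, ht, hm, Prod.pow_mk, Prod.pow_mk, ← ofAdd_nsmul, ← ofAdd_nsmul]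
  simp

theorem pow_mul_pow_eq_of_commute {t m c : G} (hc : m * t = t * m * c) (hct : Commute c t)
    (hcm : Commute c m) (a b : ℕ) : m ^ b * t ^ a = t ^ a * m ^ b * c ^ (b * a) := by
  have h1 : m * t ^ a = t ^ a * (m * c ^ a) := by
    have : SemiconjBy m t (t * c) := by rw [SemiconjBy, hc, mul_assoc, mul_assoc, hcm.eq]
    rw [(this.pow_right a).eq, hct.symm.mul_pow, mul_assoc, (hcm.pow_left a).eq]
  have h2 : SemiconjBy (t ^ a) (m * c ^ a) m := h1.symm
  rw [← (h2.pow_right b).eq, (hcm.symm.pow_right a).mul_pow, ← pow_mul, mul_assoc, mul_comm b a]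

theorem commutator_eq_zpowers (hG : commutator G ≤ center G) (hindex : (commutator G).index = p ^ 2)
    (hχμ : Function.Surjective (χ.prod μ)) {t m : G} (ht : χ.prod μ t = (.ofAdd 1, 1))
    (hm : χ.prod μ m = (1, .ofAdd 1)) : commutator G = zpowers ⁅m, t⁆ := by
  have hc : ⁅m, t⁆ ∈ commutator G := commutator_mem_commutator (mem_top m) (mem_top t)
  have hcentral {x : G} (hx : x ∈ commutator G) (y : G) : ⁅x, y⁆ = 1 :=
    commutatorElement_eq_one_iff_mul_comm.2 (mem_center_iff.1 (hG hx) y).symm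
  have : (zpowers ⁅m, t⁆).Normal := normal_of_le_center ((zpowers_le.2 hc).trans hG)
  refine le_antisymm (commutator_le_of_closure_eq_top (S := insert t (insert m (commutator G)))
    ?_ ?_) (zpowers_le.2 hc)
  · refine (eq_top_iff' _).2 fun x ↦ ?_
    obtain ⟨y, hy, hx⟩ := exists_eq_pow_mul_pow_mul hindex hχμ ht hm x
    rw [hx]
    exact mul_mem (mul_mem (pow_mem (subset_closure (by simp)) _)
      (pow_mem (subset_closure (by simp)) _)) (subset_closure (.inr (.inr hy)))
  · rintro x (hx | hx | hx) y (hy | hy | hy)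
    case inr.inr.inl | inr.inr.inr.inl | inr.inr.inr.inr => simp [hcentral hx]
    case inl.inr.inr | inr.inl.inr.inr => simp [← commutatorElement_inv y x, hcentral hy]
    all_goals rw [hx, hy]
    · simp
    · exact commutatorElement_inv m t ▸ inv_mem (mem_zpowers _)
    · exact mem_zpowers _
    · simp

theorem mul_eq_mul_mul_commutatorElement {x y : G} (hxy : ⁅x, y⁆ ∈ center G) :
    x * y = y * x * ⁅x, y⁆ := by
  rw [mem_center_iff.1 hxy]
  simp [commutatorElement_def, mul_assoc]

theorem pow_commutatorElement_eq_one {x y : G} {n : ℕ} (hxy : ⁅x, y⁆ ∈ center G)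
    (hx : x ^ n ∈ center G) : ⁅x, y⁆ ^ n = 1 := by
  have hcomm (u : G) : Commute ⁅x, y⁆ u := (mem_center_iff.1 hxy u).symm
  have := pow_mul_pow_eq_of_commute (mul_eq_mul_mul_commutatorElement hxy) (hcomm y) (hcomm x) 1 n
  rw [mul_one, pow_one, ← mem_center_iff.1 hx y] at this
  exact left_eq_mul.1 this

theorem orderOf_commutatorElement_eq (hG : commutator G ≤ center G) (hG' : commutator G ≠ ⊥)
    (hindex : (commutator G).index = p ^ 2)
    (hχμ : Function.Surjective (χ.prod μ)) {t m : G} (ht : χ.prod μ t = (.ofAdd 1, 1))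
    (hm : χ.prod μ m = (1, .ofAdd 1)) : orderOf ⁅m, t⁆ = p := by
  have hmt : ⁅m, t⁆ ∈ center G := hG (commutator_mem_commutator (mem_top m) (mem_top t))
  refine orderOf_eq_prime (pow_commutatorElement_eq_one hmt (hG ?_)) fun h ↦ hG' ?_
  · rw [← ker_prod_eq_commutator hindex hχμ, MonoidHom.mem_ker, map_pow, hm]
    simp [← ofAdd_nsmul]
  · rw [commutator_eq_zpowers hG hindex hχμ ht hm, h, zpowers_one_eq_bot]

theorem card_commutator (hG : commutator G ≤ center G) (hG' : commutator G ≠ ⊥)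
    (hindex : (commutator G).index = p ^ 2) (hχμ : Function.Surjective (χ.prod μ)) :
    Nat.card (commutator G) = p := by
  obtain ⟨t, ht⟩ := hχμ (.ofAdd 1, 1)
  obtain ⟨m, hm⟩ := hχμ (1, .ofAdd 1)
  rw [commutator_eq_zpowers hG hindex hχμ ht hm, Nat.card_zpowers,
    orderOf_commutatorElement_eq hG hG' hindex hχμ ht hm]

theorem pow_val_mul_pow_val_mul_pow_val {t m c : G} (hc : m * t = t * m * c)
    (hcomm : ∀ x, Commute c x) (hpow : ∀ x : G, x ^ p = 1) (a b u a' b' u' : ZMod p) :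
    t ^ a.val * m ^ b.val * c ^ u.val * (t ^ a'.val * m ^ b'.val * c ^ u'.val) =
      t ^ (a + a').val * m ^ (b + b').val * c ^ (u + u' + b * a').val := by
  have hswap : m ^ b.val * t ^ a'.val = t ^ a'.val * m ^ b.val * c ^ (b * a').val := by
    rw [pow_val_mul (hpow c), ← pow_mul]
    exact pow_mul_pow_eq_of_commute hc (hcomm t) (hcomm m) _ _
  calc t ^ a.val * m ^ b.val * c ^ u.val * (t ^ a'.val * m ^ b'.val * c ^ u'.val)
      = t ^ a.val * (m ^ b.val * t ^ a'.val) * (m ^ b'.val * c ^ u.val * c ^ u'.val) := by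
        rw [((hcomm (m ^ b'.val)).pow_left u.val).symm.eq, mul_assoc (t ^ a.val * m ^ b.val),
          mul_assoc (t ^ a'.val), ← mul_assoc (c ^ u.val), ((hcomm (t ^ a'.val)).pow_left u.val).eq]
        simp only [mul_assoc]
    _ = t ^ a.val * t ^ a'.val * (m ^ b.val * m ^ b'.val)
          * (c ^ u.val * c ^ u'.val * c ^ (b * a').val) := by
        rw [hswap, mul_assoc, mul_assoc (t ^ a'.val * m ^ b.val), ((hcomm _).pow_left _).eq]
        simp only [mul_assoc]
    _ = _ := by simp only [pow_val_add (hpow _)]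

theorem exists_heisenberg_cocycle (hG : commutator G ≤ center G) (hG' : commutator G ≠ ⊥)
    (hindex : (commutator G).index = p ^ 2) (hχμ : Function.Surjective (χ.prod μ))
    (hpow : ∀ x : G, x ^ p = 1) :
    ∃ ν : G → ZMod p, ∀ x y, ν (x * y) = ν x + ν y + (μ x).toAdd * (χ y).toAdd := by
  obtain ⟨t, ht⟩ := hχμ (.ofAdd 1, 1)
  obtain ⟨m, hm⟩ := hχμ (1, .ofAdd 1)
  have hmt : ⁅m, t⁆ ∈ center G := hG (commutator_mem_commutator (mem_top m) (mem_top t))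
  have hcomm (x : G) : Commute ⁅m, t⁆ x := (mem_center_iff.1 hmt x).symm
  have hrepr (x : G) : ∃ a : ZMod p,
      x = t ^ (χ x).toAdd.val * m ^ (μ x).toAdd.val * ⁅m, t⁆ ^ a.val := by
    obtain ⟨y, hy, hx⟩ := exists_eq_pow_mul_pow_mul hindex hχμ ht hm x
    rw [commutator_eq_zpowers hG hindex hχμ ht hm] at hy
    obtain ⟨a, rfl⟩ := exists_pow_val_eq (hpow _) hy
    exact ⟨a, hx⟩
  choose ν hν using hrepr
  refine ⟨ν, fun x y ↦
    pow_val_injective (orderOf_commutatorElement_eq hG hG' hindex hχμ ht hm) ?_⟩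
  have hxy := pow_val_mul_pow_val_mul_pow_val (mul_eq_mul_mul_commutatorElement hmt) hcomm hpow
    (χ x).toAdd (μ x).toAdd (ν x) (χ y).toAdd (μ y).toAdd (ν y)
  rw [← hν, ← hν, ← toAdd_mul, ← map_mul, ← toAdd_mul, ← map_mul] at hxy
  exact mul_left_cancel ((hν (x * y)).symm.trans hxy)

theorem surjective_lift_prod {N : Subgroup G} [N.Normal] (hχμ : Function.Surjective (χ.prod μ))
    (hχ : N ≤ χ.ker) (hμ : N ≤ μ.ker) :
    Function.Surjective ((QuotientGroup.lift N χ hχ).prod (QuotientGroup.lift N μ hμ)) := fun y ↦ by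
  obtain ⟨x, rfl⟩ := hχμ y
  exact ⟨x, rfl⟩

theorem map_mk_commutator (N : Subgroup G) [N.Normal] :
    (commutator G).map (QuotientGroup.mk' N) = commutator (G ⧸ N) := by
  rw [commutator_def, map_commutator, ← MonoidHom.range_eq_map, QuotientGroup.range_mk',
    commutator_def]

theorem index_commutator_quotient {N : Subgroup G} [N.Normal] (hN : N ≤ commutator G) :
    (commutator (G ⧸ N)).index = (commutator G).index := by
  rw [← map_mk_commutator, index_map_eq _ (QuotientGroup.mk'_surjective N)
    (by rwa [QuotientGroup.ker_mk'])]

theorem commutator_quotient_le_center {N : Subgroup G} [N.Normal]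
    (hN : ⁅commutator G, (⊤ : Subgroup G)⁆ ≤ N) : commutator (G ⧸ N) ≤ center (G ⧸ N) := by
  rw [← commutator_top_right_eq_bot_iff_le_center, ← map_mk_commutator,
    ← QuotientGroup.range_mk' N, MonoidHom.range_eq_map, ← map_commutator, Subgroup.map_eq_bot_iff,
    QuotientGroup.ker_mk']
  exact hN

theorem commutator_le_zpowers_sup (hindex : (commutator G).index = p ^ 2)
    (hχμ : Function.Surjective (χ.prod μ)) {y : G} (hy : y ∈ commutator G)
    (hy3 : y ∉ ⁅commutator G, (⊤ : Subgroup G)⁆) :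
    commutator G ≤ zpowers y ⊔ ⁅commutator G, (⊤ : Subgroup G)⁆ := by
  set N := ⁅commutator G, (⊤ : Subgroup G)⁆
  let π := QuotientGroup.mk' N
  have hle (ψ : G →* Multiplicative (ZMod p)) : N ≤ ψ.ker :=
    (commutator_le_left _ _).trans (Abelianization.commutator_subset_ker ψ)
  have hπy : π y ∈ commutator (G ⧸ N) := map_mk_commutator N ▸ mem_map_of_mem π hy
  have hπy1 : π y ≠ 1 := fun h ↦ hy3 ((QuotientGroup.eq_one_iff y).1 h)
  have hcard : Nat.card (commutator (G ⧸ N)) = p :=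
    card_commutator (commutator_quotient_le_center le_rfl)
      (ne_bot_iff_exists_ne_one.2 ⟨⟨π y, hπy⟩, fun h ↦ hπy1 (congrArg Subtype.val h)⟩)
      ((index_commutator_quotient (commutator_le_left _ _)).trans hindex)
      (surjective_lift_prod hχμ (hle χ) (hle μ))
  intro x hx
  have hπx : π x ∈ (zpowers y).map π := by
    rw [MonoidHom.map_zpowers, zpowers_eq_of_mem_of_card_eq hπy hπy1 hcard, ← map_mk_commutator]
    exact mem_map_of_mem π hx
  rw [← QuotientGroup.ker_mk' N, ← comap_map_eq]
  exact hπx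

end Heisenberg

/-! ### Antichains in abelian `p`-groups -/

section AbelianWidth

variable {p : ℕ} [Fact p.Prime] {A : Type*} [CommGroup A]

theorem sq_le_card_ker_powMonoidHom [Finite A] (hA : IsPGroup p A) (hcyc : ¬ IsCyclic A) :
    p ^ 2 ≤ Nat.card (powMonoidHom p : A →* A).ker := by
  obtain ⟨χ, μ, hχμ⟩ := exists_characters_of_not_isCyclic hA hcyc
  set f : A →* A := powMonoidHom p
  have hindex : (χ.prod μ).ker.index = p ^ 2 := by
    simp [index_ker, MonoidHom.range_eq_top.2 hχμ, sq]
  have hle : f.range ≤ (χ.prod μ).ker := by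
    rintro _ ⟨x, rfl⟩
    have hψ (ψ : A →* Multiplicative (ZMod p)) : ψ x ^ p = 1 := by
      rw [← toAdd_eq_zero, toAdd_pow]; simp
    simp [f, MonoidHom.mem_ker, hψ]
  have hcard : Nat.card f.ker = f.range.index := by
    refine Nat.eq_of_mul_eq_mul_right (Nat.card_pos (α := f.range)) ?_
    rw [← index_ker, card_mul_index, index_ker, index_mul_card]
  rw [hcard, ← hindex]
  exact Nat.le_of_dvd (Nat.pos_of_ne_zero index_ne_zero_of_finite) (index_dvd_of_le hle)

theorem card_ker_powMonoidHom_le [Finite A] : Nat.card (powMonoidHom p : A →* A).ker ≤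
    {H : Subgroup A | Nat.card H = p}.ncard * (p - 1) + 1 := by
  classical
  let P := (Set.toFinite {H : Subgroup A | Nat.card H = p}).toFinset
  let U := P.biUnion fun H ↦ (Set.toFinite ((H : Set A) \ {1})).toFinset
  have hker : ((powMonoidHom p : A →* A).ker : Set A) ⊆ insert 1 U := fun x hx ↦ by
    have hxp : x ^ p = 1 := hx
    by_cases hx1 : x = 1
    · exact .inl hx1
    · have hcard : Nat.card (zpowers x) = p := by rw [Nat.card_zpowers, orderOf_eq_prime hxp hx1]
      exact .inr (by simpa [U, P] using ⟨zpowers x, mem_zpowers x, hcard, hx1⟩)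
  have hU : U.card ≤ P.card * (p - 1) := Finset.card_biUnion_le_card_mul _ _ _ fun H hH ↦ by
    have hH : Nat.card H = p := by simpa [P] using hH
    rw [← Set.ncard_eq_toFinset_card, Set.ncard_sdiff_singleton_of_mem H.one_mem,
      ← Nat.card_coe_set_eq]
    exact (congrArg (· - 1) hH).le
  rw [← Set.ncard_eq_toFinset_card] at hU
  calc Nat.card (powMonoidHom p : A →* A).ker
      ≤ (insert 1 U : Set A).ncard := by
        rw [← Nat.card_coe_set_eq]
        exact Nat.card_mono (Set.toFinite _) hker
    _ ≤ U.card + 1 := by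
        rw [← Set.ncard_coe_finset]
        exact Set.ncard_insert_le 1 _
    _ ≤ _ := by gcongr

theorem eq_zpowers_pow_of_card_eq {a : A} (ha : orderOf a = p ^ 2) {H : Subgroup A}
    (hHa : H ≤ zpowers a) (hH : Nat.card H = p) : H = zpowers (a ^ p) := by
  have hp : p.Prime := Fact.out
  obtain ⟨x, hx, hx1⟩ := H.bot_or_exists_ne_one.resolve_left fun h ↦
    hp.ne_one (by rw [← hH, h, card_bot])
  have horder : orderOf (a ^ p) = p := by
    rw [orderOf_pow_of_dvd hp.ne_zero (ha ▸ dvd_pow_self p two_ne_zero), ha, sq,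
      Nat.mul_div_cancel _ hp.pos]
  rw [← zpowers_eq_of_mem_of_card_eq hx hx1 hH]
  refine zpowers_eq_of_mem_of_card_eq ?_ hx1 (by rw [Nat.card_zpowers, horder])
  obtain ⟨k, rfl⟩ := hHa hx
  have hxp : (a ^ k) ^ p = 1 := by
    rw [← hH]
    exact congrArg Subtype.val (pow_card_eq_one' (x := (⟨a ^ k, hx⟩ : H)))
  rw [← zpow_natCast, ← zpow_mul, ← orderOf_dvd_iff_zpow_eq_one, ha, Nat.cast_pow, sq] at hxp
  obtain ⟨l, rfl⟩ := Int.dvd_of_mul_dvd_mul_right (mod_cast hp.ne_zero) hxp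
  exact ⟨l, by simp [zpow_mul]⟩

theorem exists_antichain_of_orderOf_eq_sq [Finite A] {a b : A} (ha : orderOf a = p ^ 2)
    (hb : b ^ p = 1) (hba : b ∉ zpowers a) :
    ∃ S : Set (Subgroup A), IsAntichain (· ≤ ·) S ∧
      {H : Subgroup A | Nat.card H = p}.ncard < S.ncard := by
  have hp : p.Prime := Fact.out
  set P := {H : Subgroup A | Nat.card H = p}
  have heq {H K : Subgroup A} (hHK : Nat.card H = Nat.card K) (hle : H ≤ K) : H = K :=
    eq_of_le_of_card_ge hle hHK.ge
  have hab : orderOf (a * b) = p ^ 2 := orderOf_eq_prime_pow (n := 1)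
    (by
      rw [pow_one, mul_pow, hb, mul_one, ← orderOf_dvd_iff_pow_eq_one, ha]
      exact fun h ↦ absurd (Nat.le_of_dvd hp.pos h) (by nlinarith [hp.one_lt]))
    (by rw [mul_pow, ← ha, pow_orderOf_eq_one, ha, sq, pow_mul, hb, one_pow, mul_one])
  have hincomp {u : A} (hu : orderOf u = p ^ 2) (hup : u ^ p = a ^ p) {H : Subgroup A}
      (hH : H ∈ P \ {zpowers (a ^ p)}) : ¬ zpowers u ≤ H ∧ ¬ H ≤ zpowers u := by
    refine ⟨fun h ↦ ?_, fun h ↦ hH.2 (hup ▸ eq_zpowers_pow_of_card_eq hu h hH.1)⟩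
    have := card_le_of_le h
    rw [Nat.card_zpowers, hu, hH.1] at this
    nlinarith [hp.one_lt]
  have hne : zpowers a ≠ zpowers (a * b) := fun h ↦ hba <| by
    simpa using mul_mem (inv_mem (mem_zpowers a)) (h.ge (mem_zpowers (a * b)))
  have hcard : Nat.card (zpowers a) = Nat.card (zpowers (a * b)) := by
    rw [Nat.card_zpowers, Nat.card_zpowers, ha, hab]
  have hup : (a * b) ^ p = a ^ p := by rw [mul_pow, hb, mul_one]
  refine ⟨insert (zpowers a) (insert (zpowers (a * b)) (P \ {zpowers (a ^ p)})), ?_, ?_⟩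
  · refine isAntichain_insert.2 ⟨isAntichain_insert.2 ⟨fun H hH K hK hne hle ↦
      hne (heq (hH.1.trans hK.1.symm) hle), fun H hH _ ↦ hincomp hab hup hH⟩, ?_⟩
    rintro H (rfl | hH) -
    · exact ⟨fun h ↦ hne (heq hcard h), fun h ↦ hne (heq hcard.symm h).symm⟩
    · exact hincomp ha rfl hH
  · rw [Set.ncard_insert_of_notMem, Set.ncard_insert_of_notMem]
    · have := Set.pred_ncard_le_ncard_sdiff_singleton P (zpowers (a ^ p))
      lia
    · exact fun h ↦ (hincomp hab hup h).1 le_rfl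
    · rintro (h | h)
      exacts [hne h, (hincomp ha rfl h).1 le_rfl]

theorem exists_orderOf_eq_sq (hA : IsPGroup p A) {x : A} (hx : x ^ p ≠ 1) :
    ∃ a : A, orderOf a = p ^ 2 := by
  have hp : p.Prime := Fact.out
  obtain ⟨k, hk⟩ := IsPGroup.iff_orderOf.1 hA x
  have hk2 : 2 ≤ k := by
    by_contra! hlt
    refine hx (orderOf_dvd_iff_pow_eq_one.1 (hk ▸ ?_))
    exact (pow_dvd_pow p (show k ≤ 1 by lia)).trans (pow_one p).dvd
  refine ⟨x ^ p ^ (k - 2), ?_⟩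
  rw [orderOf_pow_of_dvd (pow_pos hp.pos _).ne' (hk ▸ pow_dvd_pow p (k.sub_le 2)), hk,
    Nat.pow_div (k.sub_le 2) hp.pos, Nat.sub_sub_self hk2]

theorem card_eq_sq_of_forall_antichain_ncard_le [Finite A] (hA : IsPGroup p A)
    (hcyc : ¬ IsCyclic A)
    (hwidth : ∀ S : Set (Subgroup A), IsAntichain (· ≤ ·) S → S.ncard ≤ p + 1) :
    Nat.card A = p ^ 2 := by
  have hp : p.Prime := Fact.out
  have hker := sq_le_card_ker_powMonoidHom hA hcyc
  have hP := card_ker_powMonoidHom_le (p := p) (A := A)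
  set P := {H : Subgroup A | Nat.card H = p}
  have hexp : (powMonoidHom p : A →* A).ker = ⊤ := by
    by_contra hne
    obtain ⟨x, hx⟩ := not_forall.1 fun h ↦ hne ((eq_top_iff' _).2 h)
    obtain ⟨a, ha⟩ := exists_orderOf_eq_sq hA hx
    obtain ⟨b, hb, hba⟩ : ∃ b, b ^ p = 1 ∧ b ∉ zpowers a := by
      by_contra! h
      have hle : (powMonoidHom p).ker ≤ zpowers a := h
      have : IsCyclic (powMonoidHom p : A →* A).ker :=
        isCyclic_of_injective (inclusion hle) (inclusion_injective hle)
      have hdvd : Nat.card (powMonoidHom p : A →* A).ker ∣ p := by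
        rw [← IsCyclic.exponent_eq_card]
        exact Monoid.exponent_dvd_of_forall_pow_eq_one fun x ↦ Subtype.ext x.2
      nlinarith [Nat.le_of_dvd hp.pos hdvd, hp.one_lt]
    obtain ⟨S, hS, hPS⟩ := exists_antichain_of_orderOf_eq_sq ha hb hba
    have := hwidth S hS
    have : P.ncard * (p - 1) ≤ p * (p - 1) := by gcongr; lia
    have : p * (p - 1) + p = p ^ 2 := by
      rw [← Nat.mul_succ, Nat.succ_eq_add_one, Nat.sub_add_cancel hp.pos, sq]
    have := hp.two_le
    lia
  rw [hexp, card_top] at hker hP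
  have hPanti : IsAntichain (· ≤ ·) P := fun H hH K hK hne hle ↦
    hne (eq_of_le_of_card_ge hle (hK.trans hH.symm).le)
  refine le_antisymm (hP.trans ?_) hker
  have : P.ncard * (p - 1) ≤ (p + 1) * (p - 1) := by gcongr; exact hwidth P hPanti
  have := Nat.sq_sub_sq p 1
  have := pow_pos hp.pos 2
  lia

end AbelianWidth

section Thin

variable {p : ℕ} [Fact p.Prime] {G : Type*} [Group G] [Finite G]

open scoped IsMulCommutative in
theorem _root_.IsThinPGroup.isCentrallyThin (hG : IsThinPGroup p G) (hpG : IsPGroup p G) :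
    IsCentrallyThin p G := fun N _ hcyc ↦ by
  refine card_eq_sq_of_forall_antichain_ncard_le ((hpG.to_quotient N).to_subgroup _) hcyc
    fun S hS ↦ ?_
  let f (H : Subgroup (center (G ⧸ N))) : Subgroup G :=
    (H.map (Subgroup.subtype _)).comap (QuotientGroup.mk' N)
  have hf {H K} : f H ≤ f K ↔ H ≤ K := by
    rw [comap_le_comap_of_surjective (QuotientGroup.mk'_surjective N),
      map_le_map_iff_of_injective (subtype_injective _)]
  have hfinj : Function.Injective f := fun H K h ↦ le_antisymm (hf.1 h.le) (hf.1 h.ge)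
  rw [← Set.ncard_image_of_injective S hfinj]
  refine hG _ ?_ ?_
  · rintro _ ⟨H, -, rfl⟩
    have : (H.map (Subgroup.subtype _)).Normal := normal_of_le_center (map_subtype_le H)
    infer_instance
  · rintro _ ⟨H, hH, rfl⟩ _ ⟨K, hK, rfl⟩ hne hle
    exact hS hH hK (fun h ↦ hne (congrArg f h)) (hf.1 hle)

end Thin

/-! ### The case of class two and `p = 2` -/

section InvolutoryAutomorphism

variable {G : Type*} [Group G]

theorem conj_eq_one_of_mem_center {c : G} (hc : c ∈ center G) : MulAut.conj c = 1 := by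
  ext x
  rw [MulAut.conj_apply, ← mem_center_iff.1 hc x, mul_inv_cancel_right, MulAut.one_apply]

theorem exists_mulAut_sq_eq_conj {t : G} (ht : orderOf t = 4) (htz : t ^ 2 ∈ center G)
    {ε : G →* Multiplicative (ZMod 2)} (hε : IsCommutatorCharacter (t ^ 2) t ε) :
    ∃ α : MulAut G, (∀ x, α x = x * t ^ (ε x).toAdd.val) ∧ α ^ 2 = MulAut.conj t := by
  have hz2 : orderOf (t ^ 2) = 2 := by rw [orderOf_pow_of_dvd two_ne_zero (by norm_num [ht]), ht]
  have hzpow : (t ^ 2) ^ 2 = 1 := orderOf_dvd_iff_pow_eq_one.1 hz2.dvd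
  have hεt : ε t = 1 := hε.apply_self hz2
  let δ (x : G) : G := t ^ (ε x).toAdd.val
  have hmul (x y : G) : δ (x * y) = y⁻¹ * δ x * y * δ y := by
    change t ^ (ε (x * y)).toAdd.val = y⁻¹ * t ^ (ε x).toAdd.val * y * t ^ (ε y).toAdd.val
    rw [hε.inv_mul_pow_val_mul htz hzpow, ← pow_mul, ← pow_add, ← pow_add, map_mul, toAdd_mul]
    refine pow_eq_pow_iff_modEq.2 (ht ▸ ?_)
    generalize (ε x).toAdd = a, (ε y).toAdd = b
    decide +revert
  have hδ (x : G) : δ (δ x) = 1 := by simp [δ, hεt]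
  refine ⟨crossedMulAut δ hmul hδ, fun x ↦ rfl, ?_⟩
  ext x
  rw [crossedMulAut_pow_apply, ← pow_mul, mul_comm, pow_mul, ← hε,
    mem_center_iff.1 (hε x ▸ pow_mem htz _) x, commutatorElement_def, inv_mul_cancel_right,
    MulAut.conj_apply]

theorem InnerOfPowEqOne.exists_commutator_eq_of_orderOf_eq_four (hG : InnerOfPowEqOne 2 G) {t m : G}
    (ht : orderOf t = 4) (htz : t ^ 2 ∈ center G) (htG : ∀ x, ⁅t, x⁆ ∈ zpowers (t ^ 2))
    (hm : m ^ 2 ∈ center G) (htm : ⁅t, m⁆ ≠ 1) : ∃ h, ⁅m⁻¹, h⁆ = t := by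
  have hz2 : orderOf (t ^ 2) = 2 := by rw [orderOf_pow_of_dvd two_ne_zero (by norm_num [ht]), ht]
  obtain ⟨ε, hε⟩ := ThinPGroup.exists_isCommutatorCharacter htz hz2 htG
  obtain ⟨α, hα, hα2⟩ := exists_mulAut_sq_eq_conj ht htz hε
  have hεm : (ε m).toAdd = 1 := Fin.eq_one_of_ne_zero _ fun h ↦
    htm ((hε m).trans ((pow_val_eq_one_iff hz2).2 h))
  have hαm : α m = m * t := by rw [hα, hεm, ZMod.val_one, pow_one]
  have hφ : (α * MulAut.conj m) ^ 2 = 1 := by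
    have hswap : α * MulAut.conj m = MulAut.conj (m * t) * α := by ext x; simp [← hαm]
    calc (α * MulAut.conj m) ^ 2 = MulAut.conj (m * t) * α ^ 2 * MulAut.conj m := by
          rw [sq, hswap, mul_assoc, ← hswap, sq]; simp only [mul_assoc]
      _ = MulAut.conj (m ^ 2 * t ^ 2) := by
          rw [hα2, ← map_mul, ← map_mul, mul_assoc m, ← sq, mul_assoc,
            ← mem_center_iff.1 htz, ← mul_assoc, ← sq]
      _ = 1 := conj_eq_one_of_mem_center (mul_mem hm htz)
  obtain ⟨h, hh⟩ := hG _ hφ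
  have hhm : h * m * h⁻¹ = α (m * m * m⁻¹) := DFunLike.congr_fun hh m
  rw [mul_inv_cancel_right, hαm] at hhm
  exact ⟨h, by rw [commutatorElement_def, inv_inv, mul_assoc, mul_assoc, ← mul_assoc h, hhm,
    inv_mul_cancel_left]⟩

end InvolutoryAutomorphism

/-! ### The center -/

section Center

variable {G : Type*} [Group G]

theorem not_isCyclic_of_commutator_ne_bot (hG' : commutator G ≠ ⊥) :
    ¬ IsCyclic G := fun _ ↦ hG' <| (commutator_eq_bot_iff_center_eq_top G).2 <|
  @CommGroup.center_eq_top G IsCyclic.commGroup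

theorem inf_center_ne_bot [Group.IsNilpotent G] {M : Subgroup G} [M.Normal] (hM : M ≠ ⊥) :
    M ⊓ center G ≠ ⊥ := fun h ↦ hM <| by
  have hinf (n : ℕ) : M ⊓ Subgroup.upperCentralSeries G n = ⊥ := by
    induction n with
    | zero => exact inf_bot_eq M
    | succ n ih =>
      refine le_bot_iff.1 fun x hx ↦ h.le ⟨hx.1, mem_center_iff.2 fun y ↦ ?_⟩
      have hxy : ⁅x, y⁆ ∈ M ⊓ Subgroup.upperCentralSeries G n :=
        ⟨commutator_le_left M ⊤ (commutator_mem_commutator hx.1 (mem_top y)), hx.2 y⟩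
      rw [ih, mem_bot, commutatorElement_eq_one_iff_mul_comm] at hxy
      exact hxy.symm
  obtain ⟨n, hn⟩ := Group.IsNilpotent.nilpotent G
  simpa [hn] using hinf n

theorem isCyclic_center_quotient {N : Subgroup G} [N.Normal] {x : G}
    (h : N.upperCentralSeriesStep ≤ zpowers x ⊔ N) : IsCyclic (center (G ⧸ N)) := by
  let π := QuotientGroup.mk' N
  refine isCyclic_of_le (H' := zpowers (π x)) fun y hy ↦ ?_
  obtain ⟨v, rfl⟩ := QuotientGroup.mk'_surjective N y
  have hv : v ∈ zpowers x ⊔ N := h (N.upperCentralSeriesStep_eq_comap_center.ge hy)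
  have hmap : (zpowers x ⊔ N).map π = zpowers (π x) := by
    rw [Subgroup.map_sup, (Subgroup.map_eq_bot_iff N).2 (QuotientGroup.ker_mk' N).ge, sup_bot_eq,
      MonoidHom.map_zpowers]
  exact hmap ▸ mem_map_of_mem π hv

variable {p : ℕ} [Fact p.Prime] [Finite G]

theorem exists_mem_inf_center_orderOf_eq (hG : IsPGroup p G) {M : Subgroup G} [M.Normal]
    (hM : M ≠ ⊥) : ∃ z ∈ M ⊓ center G, orderOf z = p := by
  have := hG.isNilpotent
  have : Nontrivial ↥(M ⊓ center G) := nontrivial_iff_ne_bot _ |>.2 (inf_center_ne_bot hM)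
  obtain ⟨n, hn, hcard⟩ := (hG.to_subgroup (M ⊓ center G)).nontrivial_iff_card.1 this
  obtain ⟨z, hz⟩ := exists_prime_orderOf_dvd_card' p (hcard ▸ dvd_pow_self p hn.ne')
  exact ⟨z, z.2, (orderOf_coe z).trans hz⟩

theorem center_le_of_card_center_eq (hG : IsPGroup p G) (hcard : Nat.card (center G) = p)
    {M : Subgroup G} [M.Normal] (hM : M ≠ ⊥) : center G ≤ M := by
  obtain ⟨z, hz, hzp⟩ := exists_mem_inf_center_orderOf_eq hG hM
  have hz1 : z ≠ 1 := fun h ↦ (Fact.out : p.Prime).ne_one (by rw [← hzp, h, orderOf_one])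
  exact zpowers_eq_of_mem_of_card_eq hz.2 hz1 hcard ▸ zpowers_le.2 hz.1

end Center

/-! ### Groups all of whose automorphisms of order `p` are inner -/

section Inner

variable {p : ℕ} [Fact p.Prime] {G : Type*} [Group G] [Finite G]

theorem InnerOfPowEqOne.commutator_ne_bot (hI : InnerOfPowEqOne p G) (hG : IsPGroup p G)
    (hcard : p ^ 2 ≤ Nat.card G) : commutator G ≠ ⊥ := fun hG' ↦ by
  have hp : p.Prime := Fact.out
  have htop : center G = ⊤ := (commutator_eq_bot_iff_center_eq_top G).1 hG'
  have : Nontrivial G := Finite.one_lt_card_iff_nontrivial.1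
    ((Nat.one_lt_pow two_ne_zero hp.one_lt).trans_le hcard)
  obtain ⟨z, hz, hzp⟩ := exists_mem_inf_center_orderOf_eq hG (top_ne_bot (α := Subgroup G))
  have hne : zpowers z ≠ ⊤ := fun h ↦ by
    rw [← card_top, ← h, Nat.card_zpowers, hzp, sq] at hcard
    exact hcard.not_gt (lt_mul_self hp.one_lt)
  obtain ⟨χ, hχ, hzχ⟩ := exists_character_of_ne_top hG hne
  obtain ⟨w, hw⟩ := hI.exists_isCommutatorCharacter hz.2 (hzp ▸ pow_orderOf_eq_one z)
    (hzχ (mem_zpowers z))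
  obtain ⟨t, ht⟩ := hχ (.ofAdd 1)
  have hwt : ⁅w, t⁆ = 1 := mem_bot.1 (hG' ▸ commutator_mem_commutator (mem_top w) (mem_top t))
  rw [hw, ht, pow_val_eq_one_iff hzp] at hwt
  exact one_ne_zero hwt

theorem InnerOfPowEqOne.card_center (hI : InnerOfPowEqOne p G) (hthin : IsCentrallyThin p G)
    (hG : IsPGroup p G) (hG' : commutator G ≠ ⊥) :
    Nat.card (center G) = p ∧ ¬ IsCyclic (center (G ⧸ center G)) := by
  have hp : p.Prime := Fact.out
  obtain ⟨z, ⟨hzG, hzc⟩, hzp⟩ := exists_mem_inf_center_orderOf_eq hG hG'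
  have hz : zpowers z ≤ center G := zpowers_le.2 hzc
  have := normal_of_le_center hz
  obtain ⟨χ, μ, hχμ⟩ := exists_characters_of_not_isCyclic hG
    (not_isCyclic_of_commutator_ne_bot hG')
  have hker (ψ : G →* Multiplicative (ZMod p)) :
      ∃ w, IsCommutatorCharacter z w ψ :=
    hI.exists_isCommutatorCharacter hzc (hzp ▸ pow_orderOf_eq_one z)
      (Abelianization.commutator_subset_ker ψ hzG)
  obtain ⟨w, hw⟩ := hker χ
  obtain ⟨w', hw'⟩ := hker μ
  have hcenter := center_eq_zpowers hthin hz hzp hw hw' hχμ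
  refine ⟨by rw [hcenter, Nat.card_zpowers, hzp], ?_⟩
  have hquot (N : Subgroup G) [N.Normal] (hN : N = zpowers z) : ¬ IsCyclic (center (G ⧸ N)) := by
    subst hN
    exact not_isCyclic_center_quotient hz hzp hw hw' hχμ
  exact hquot _ hcenter

end Inner

/-! ### The `p`-th powers modulo the third term of the lower central series -/

section Powers

variable {p : ℕ} [Fact p.Prime] {G : Type*} [Group G]

theorem not_commutator_le_commutator_commutator [Group.IsNilpotent G] (hG' : commutator G ≠ ⊥) :
    ¬ commutator G ≤ ⁅commutator G, (⊤ : Subgroup G)⁆ := fun h ↦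
  hG' (le_bot_iff.1 (le_of_le_commutator_top_sup (h.trans_eq (sup_bot_eq _).symm)))

theorem upperCentralSeriesStep_le_commutator [Group.IsNilpotent G] (hG' : commutator G ≠ ⊥)
    (hindex : (commutator G).index = p ^ 2) {N : Subgroup G} [N.Normal]
    (hN : N ≤ ⁅commutator G, (⊤ : Subgroup G)⁆) : N.upperCentralSeriesStep ≤ commutator G := by
  rw [← upperCentralSeriesStep_eq_commutator hindex le_rfl
    (not_commutator_le_commutator_commutator hG')]
  exact fun x hx y ↦ hN (hx y)

variable [Finite G]

theorem commutator_le_zpowers_of_le_normalClosure (hG : IsPGroup p G) {x : G}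
    (hx : commutator G ≤ normalClosure {x ^ p}) : commutator G ≤ zpowers x := by
  set M := zpowers x ⊔ commutator G
  by_contra hle
  have hxM : x ∈ M := mem_sup_left (mem_zpowers x)
  have hne : (zpowers x).subgroupOf M ≠ ⊤ := fun h ↦
    hle (le_sup_right.trans (subgroupOf_eq_top.1 h))
  obtain ⟨ψ, hψ, hxψ⟩ := exists_character_of_ne_top (hG.to_subgroup M) hne
  have hconj (g : G) : g * x * g⁻¹ ∈ M := by
    have : ⁅g, x⁆ ∈ commutator G := commutator_mem_commutator (mem_top g) (mem_top x)
    simpa [commutatorElement_def] using mul_mem (mem_sup_right this) hxM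
  have hclosure : normalClosure {x ^ p} ≤ ψ.ker.map M.subtype := by
    refine (closure_le _).2 fun y hy ↦ ?_
    obtain ⟨_, rfl, hxy⟩ := Group.mem_conjugatesOfSet_iff.1 hy
    obtain ⟨g, rfl⟩ := isConj_iff.1 hxy
    refine ⟨⟨g * x * g⁻¹, hconj g⟩ ^ p, ?_, conj_pow⟩
    rw [SetLike.mem_coe, MonoidHom.mem_ker, map_pow, ← toAdd_eq_zero, toAdd_pow]
    simp
  have hM : M ≤ ψ.ker.map M.subtype :=
    sup_le (zpowers_le.2 ⟨⟨x, hxM⟩, hxψ (mem_zpowers x), rfl⟩) (hx.trans hclosure)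
  obtain ⟨y, hy⟩ := hψ (.ofAdd 1)
  obtain ⟨y', hy', hyy'⟩ := hM y.2
  obtain rfl : y' = y := Subtype.ext hyy'
  rw [MonoidHom.mem_ker.1 hy'] at hy
  exact one_ne_zero (congrArg Multiplicative.toAdd hy).symm

theorem pow_mem_commutator (hG : IsPGroup p G) (hcyc : ¬ IsCyclic G)
    (hindex : (commutator G).index = p ^ 2) (x : G) : x ^ p ∈ commutator G := by
  obtain ⟨χ, μ, hχμ⟩ := exists_characters_of_not_isCyclic hG hcyc
  rw [← ker_prod_eq_commutator hindex hχμ, MonoidHom.mem_ker, map_pow]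
  ext <;> simp

theorem pow_mem_commutator_commutator (hG : IsPGroup p G) (hG' : commutator G ≠ ⊥)
    (hindex : (commutator G).index = p ^ 2) {N : Subgroup G} [N.Normal]
    (hN : N ≤ ⁅commutator G, (⊤ : Subgroup G)⁆) (hcyc : ¬ IsCyclic (center (G ⧸ N))) (x : G) :
    x ^ p ∈ ⁅commutator G, (⊤ : Subgroup G)⁆ := by
  have := hG.isNilpotent
  have hGcyc := not_isCyclic_of_commutator_ne_bot hG'
  obtain ⟨χ, μ, hχμ⟩ := exists_characters_of_not_isCyclic hG hGcyc
  by_contra hx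
  have hle := commutator_le_zpowers_sup hindex hχμ (pow_mem_commutator hG hGcyc hindex x) hx
  have hclosure : commutator G ≤ normalClosure {x ^ p} := by
    refine le_of_le_commutator_top_sup (hle.trans ?_)
    rw [sup_comm]
    exact sup_le_sup_left (zpowers_le.2 (subset_normalClosure (Set.mem_singleton (x ^ p)))) _
  exact hcyc (isCyclic_center_quotient (le_sup_of_le_left
    ((upperCentralSeriesStep_le_commutator hG' hindex hN).trans
      (commutator_le_zpowers_of_le_normalClosure hG hclosure))))

end Powers

section Two

variable {G : Type*} [Group G]

theorem commutator_le_of_forall_sq_mem {N : Subgroup G} [N.Normal] (hN : ∀ x : G, x ^ 2 ∈ N) :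
    commutator G ≤ N := by
  rw [← Normal.quotient_commutative_iff_commutator_le]
  refine ⟨⟨Commute.of_orderOf_dvd_two ?_⟩⟩
  rintro ⟨x⟩
  exact orderOf_dvd_of_pow_eq_one ((QuotientGroup.eq_one_iff _).2 (hN x))

theorem InnerOfPowEqOne.commutator_eq_bot_of_commutator_le_center
    (hI : InnerOfPowEqOne 2 G) (hcard : Nat.card (center G) = 2) (hG : commutator G ≤ center G)
    (hsq : ∀ x : G, x ^ 2 ∈ commutator G) : commutator G = ⊥ := by
  by_contra hG'
  obtain ⟨t, ht⟩ : ∃ t : G, t ^ 2 ≠ 1 := by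
    by_contra! h
    exact hG' (le_bot_iff.1 (commutator_le_of_forall_sq_mem h))
  have htc : t ^ 2 ∈ center G := hG (hsq t)
  have hz : zpowers (t ^ 2) = center G := zpowers_eq_of_mem_of_card_eq htc ht hcard
  have hsq_center {c : G} (hc : c ∈ center G) : c ^ 2 = 1 := by
    rw [← orderOf_dvd_iff_pow_eq_one, ← hcard]
    exact orderOf_dvd_natCard _ hc
  have ht4 : orderOf t = 2 ^ (1 + 1) :=
    orderOf_eq_prime_pow (by simpa using ht) (by simpa [← pow_mul] using hsq_center htc)
  have htcomm (x : G) : ⁅t, x⁆ ∈ commutator G := commutator_mem_commutator (mem_top t) (mem_top x)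
  obtain ⟨m, hm⟩ : ∃ m : G, ⁅t, m⁆ ≠ 1 := by
    by_contra! h
    exact ht (hsq_center (mem_center_iff.2 fun x ↦
      (commutatorElement_eq_one_iff_mul_comm.1 (h x)).symm))
  obtain ⟨h, hh⟩ := hI.exists_commutator_eq_of_orderOf_eq_four ht4 htc
    (fun x ↦ hz ▸ hG (htcomm x)) (hG (hsq m)) hm
  exact ht (hsq_center (hG (hh ▸ commutator_mem_commutator (mem_top _) (mem_top h))))

theorem not_innerOfPowEqOne_two [Finite G] (hthin : IsCentrallyThin 2 G) (hG : IsPGroup 2 G)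
    (hG' : commutator G ≠ ⊥) : ¬ InnerOfPowEqOne 2 G := fun hI ↦ by
  have := hG.isNilpotent
  have hGcyc := not_isCyclic_of_commutator_ne_bot hG'
  have hindex := hthin.index_commutator hG hGcyc
  obtain ⟨hcard, hcyc⟩ := hI.card_center hthin hG hG'
  by_cases hG3 : ⁅commutator G, (⊤ : Subgroup G)⁆ = ⊥
  · exact hG' (hI.commutator_eq_bot_of_commutator_le_center hcard
      (commutator_top_right_eq_bot_iff_le_center.1 hG3) (pow_mem_commutator hG hGcyc hindex))
  · exact not_commutator_le_commutator_commutator hG' (commutator_le_of_forall_sq_mem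
      (pow_mem_commutator_commutator hG hG' hindex (center_le_of_card_center_eq hG hcard hG3) hcyc))

end Two

/-! ### Odd primes -/

section Odd

variable {p : ℕ} {G : Type*} [Group G]

theorem mul_pow_eq_of_commute {t m c : G} (hc : m * t = t * m * c) (hct : Commute c t)
    (hcm : Commute c m) (n : ℕ) : (t * m) ^ n = t ^ n * m ^ n * c ^ n.choose 2 := by
  induction n with
  | zero => simp
  | succ n ih =>
    have hmt : m ^ n * t = t * m ^ n * c ^ n := by
      simpa using pow_mul_pow_eq_of_commute hc hct hcm 1 n
    calc (t * m) ^ (n + 1) = t ^ n * m ^ n * (c ^ n.choose 2 * (t * m)) := by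
          rw [pow_succ, ih, mul_assoc]
      _ = t ^ n * (m ^ n * t) * m * c ^ n.choose 2 := by
          rw [((hct.mul_right hcm).pow_left _).eq]; simp only [mul_assoc]
      _ = t ^ (n + 1) * m ^ (n + 1) * c ^ (n + 1).choose 2 := by
          rw [hmt, ← mul_assoc, ← mul_assoc, ← pow_succ, mul_assoc _ (c ^ n), (hcm.pow_left n).eq,
            ← mul_assoc, mul_assoc _ (m ^ n), ← pow_succ, mul_assoc _ (c ^ n), ← pow_add,
            Nat.choose_succ_succ' n 1, Nat.choose_one_right]

theorem pow_mem_center_of_mem_upperCentralSeriesStep (hcard : Nat.card (center G) = p) {x : G}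
    (hx : x ∈ (center G).upperCentralSeriesStep) : x ^ p ∈ center G := by
  refine mem_center_iff.2 fun y ↦ (commutatorElement_eq_one_iff_mul_comm.1 ?_).symm
  have hpow : commutatorHom le_rfl y (⟨x, hx⟩ ^ p) = 1 := by
    rw [map_pow, ← hcard, pow_card_eq_one']
  exact congrArg Subtype.val hpow

variable [Fact p.Prime]

theorem mul_pow_of_mem_upperCentralSeriesStep (hp2 : p ≠ 2) (hcard : Nat.card (center G) = p)
    {x y : G} (hy : y ∈ (center G).upperCentralSeriesStep) : (x * y) ^ p = x ^ p * y ^ p := by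
  have hp : p.Prime := Fact.out
  have hc : ⁅y, x⁆ ∈ center G := hy x
  have hcomm (u : G) : Commute ⁅y, x⁆ u := (mem_center_iff.1 hc u).symm
  have hchoose : p ∣ p.choose 2 :=
    hp.dvd_choose_self two_ne_zero (lt_of_le_of_ne hp.two_le hp2.symm)
  have hc1 : ⁅y, x⁆ ^ p.choose 2 = 1 := orderOf_dvd_iff_pow_eq_one.1 <|
    (hcard ▸ orderOf_dvd_natCard _ hc : orderOf ⁅y, x⁆ ∣ p).trans hchoose
  rw [mul_pow_eq_of_commute (mul_eq_mul_mul_commutatorElement hc) (hcomm x) (hcomm y), hc1, mul_one]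

theorem exists_pow_eq_one_notMem_center [Finite G] (hp2 : p ≠ 2) (hcard : Nat.card (center G) = p)
    (hquot : Nat.card (center (G ⧸ center G)) = p ^ 2) :
    ∃ g ∈ (center G).upperCentralSeriesStep, g ^ p = 1 ∧ g ∉ center G := by
  have hp : p.Prime := Fact.out
  let f : (center G).upperCentralSeriesStep →* center G :=
    MonoidHom.mk' (fun x ↦ ⟨x ^ p, pow_mem_center_of_mem_upperCentralSeriesStep hcard x.2⟩)
      fun x y ↦ Subtype.ext (mul_pow_of_mem_upperCentralSeriesStep hp2 hcard y.2)
  by_contra! h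
  have hker : f.ker.map (Subgroup.subtype _) ≤ center G := by
    rintro _ ⟨x, hx, rfl⟩
    exact h x x.2 (congrArg Subtype.val hx)
  have hker_card : Nat.card f.ker ≤ p := by
    rw [← hcard, ← card_map_of_injective (subtype_injective _)]
    exact card_le_of_le hker
  have hrange : Nat.card f.range ≤ p := hcard ▸ card_le_card_group f.range
  have hdomain := f.ker.card_mul_index
  rw [index_ker, card_upperCentralSeriesStep, hcard, hquot] at hdomain
  nlinarith [Nat.mul_le_mul hker_card hrange, hp.one_lt, Nat.pow_pos (n := 2) hp.pos]

theorem InnerOfPowEqOne.exists_commutator_eq_of_odd (hI : InnerOfPowEqOne p G) (hp2 : p ≠ 2)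
    {z g : G} (hz : z ∈ center G) (hzp : z ^ p = 1) (hgp : g ^ p = 1)
    {χ : G →* Multiplicative (ZMod p)} (hχ : IsCommutatorCharacter z g χ) (hχz : χ z = 1)
    (hχg : χ g = 1) :
    ∃ h : G, ∀ x, ⁅x⁻¹, h⁆ =
      g ^ (χ x).toAdd.val * z ^ ((χ x).toAdd * ((χ x).toAdd - 1) / 2).val := by
  have h2 : (2 : ZMod p) ≠ 0 := Ring.two_ne_zero (by rwa [ZMod.ringChar_zmod_n])
  refine hI.exists_commutator_eq_pow_mul_pow hz hzp hgp hχ (fun x y ↦ ?_) hχz hχg ?_ ?_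
  · rw [map_mul, toAdd_mul]
    field_simp
    ring
  · simp [hχz]
  · simp [hχg]

theorem mem_commutator_commutator_of_mem_upperCentralSeriesStep [Finite G] (hG : IsPGroup p G)
    (hG' : commutator G ≠ ⊥) (hindex : (commutator G).index = p ^ 2) {N : Subgroup G} [N.Normal]
    (hN : N ≤ ⁅commutator G, (⊤ : Subgroup G)⁆) (hcyc : ¬ IsCyclic (center (G ⧸ N))) {g : G}
    (hgN : g ∈ N.upperCentralSeriesStep) : g ∈ ⁅commutator G, (⊤ : Subgroup G)⁆ := by
  have := hG.isNilpotent
  obtain ⟨χ, μ, hχμ⟩ := exists_characters_of_not_isCyclic hG (not_isCyclic_of_commutator_ne_bot hG')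
  have hstep := upperCentralSeriesStep_le_commutator hG' hindex hN
  by_contra hg
  have hle := commutator_le_zpowers_sup hindex hχμ (hstep hgN) hg
  set γ := ⁅commutator G, (⊤ : Subgroup G)⁆
  have hle' : commutator G ≤ (N ⊔ ⁅γ, (⊤ : Subgroup G)⁆).upperCentralSeriesStep :=
    hle.trans (sup_le (zpowers_le.2 fun x ↦ mem_sup_left (hgN x)) fun x hx y ↦
      mem_sup_right (commutator_mem_commutator hx (mem_top y)))
  have hγ : γ ≤ N := le_of_le_commutator_top_sup <| by
    rw [sup_comm]
    exact commutator_le.2 fun x hx y _ ↦ hle' hx y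
  exact hcyc (isCyclic_center_quotient (hstep.trans (hle.trans (sup_le_sup_left hγ _))))

theorem isCommutatorCharacter_lift {N : Subgroup G} [N.Normal] {g h : G}
    (hg : g ∈ N.upperCentralSeriesStep) {χ : G →* Multiplicative (ZMod p)} (hχ : N ≤ χ.ker)
    (hh : ∀ x, ∃ c ∈ N, ⁅x⁻¹, h⁆ = g ^ (χ x).toAdd.val * c) :
    IsCommutatorCharacter (g : G ⧸ N) (h : G ⧸ N) (QuotientGroup.lift N χ hχ) := by
  rintro ⟨x⟩
  obtain ⟨c, hc, hx⟩ := hh x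
  have hgc : (g : G ⧸ N) ∈ center (G ⧸ N) := N.upperCentralSeriesStep_eq_comap_center.le hg
  have hx' : ⁅(x : G ⧸ N)⁻¹, (h : G ⧸ N)⁆ = (g : G ⧸ N) ^ (χ x).toAdd.val := by
    have hc1 : (c : G ⧸ N) = 1 := (QuotientGroup.eq_one_iff c).2 hc
    calc ⁅(x : G ⧸ N)⁻¹, (h : G ⧸ N)⁆ = (g : G ⧸ N) ^ (χ x).toAdd.val * c :=
          congrArg (QuotientGroup.mk' N) hx
      _ = (g : G ⧸ N) ^ (χ x).toAdd.val := by rw [hc1, mul_one]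
  change ⁅(h : G ⧸ N), (x : G ⧸ N)⁆ = (g : G ⧸ N) ^ (χ x).toAdd.val
  calc ⁅(h : G ⧸ N), (x : G ⧸ N)⁆ = x * ⁅(x : G ⧸ N)⁻¹, (h : G ⧸ N)⁆ * (x : G ⧸ N)⁻¹ := by
        simp [commutatorElement_def, mul_assoc]
    _ = (g : G ⧸ N) ^ (χ x).toAdd.val := by
        rw [hx', mem_center_iff.1 (pow_mem hgc _), mul_inv_cancel_right]

theorem isCyclic_center_quotient_of_commutator_eq [Finite G] (hthin : IsCentrallyThin p G)
    {N : Subgroup G} [N.Normal] {g h h' : G} (hg : g ∈ N.upperCentralSeriesStep)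
    (hgp : g ^ p ∈ N) (hgN : g ∉ N) {χ μ : G →* Multiplicative (ZMod p)}
    (hχμ : Function.Surjective (χ.prod μ)) (hχ : N ≤ χ.ker) (hμ : N ≤ μ.ker)
    (hh : ∀ x, ∃ c ∈ N, ⁅x⁻¹, h⁆ = g ^ (χ x).toAdd.val * c)
    (hh' : ∀ x, ∃ c ∈ N, ⁅x⁻¹, h'⁆ = g ^ (μ x).toAdd.val * c) : IsCyclic (center (G ⧸ N)) := by
  have hgc : zpowers (g : G ⧸ N) ≤ center (G ⧸ N) :=
    zpowers_le.2 (N.upperCentralSeriesStep_eq_comap_center.le hg)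
  have := normal_of_le_center hgc
  have horder : orderOf (g : G ⧸ N) = p := orderOf_eq_prime
    ((QuotientGroup.eq_one_iff (g ^ p)).2 hgp) fun h ↦ hgN ((QuotientGroup.eq_one_iff g).1 h)
  rw [center_eq_zpowers (hthin.of_surjective (QuotientGroup.mk'_surjective N)) hgc horder
    (isCommutatorCharacter_lift hg hχ hh) (isCommutatorCharacter_lift hg hμ hh')
    (surjective_lift_prod hχμ hχ hμ)]
  infer_instance

theorem exists_cocycle_of_pow_mem_commutator_commutator [Group.IsNilpotent G]
    (hG' : commutator G ≠ ⊥) (hindex : (commutator G).index = p ^ 2)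
    {χ μ : G →* Multiplicative (ZMod p)} (hχμ : Function.Surjective (χ.prod μ))
    (hpow : ∀ x : G, x ^ p ∈ ⁅commutator G, (⊤ : Subgroup G)⁆) :
    ∃ ν : G → ZMod p, (∀ x y, ν (x * y) = ν x + ν y + (μ x).toAdd * (χ y).toAdd) ∧
      ∀ x ∈ ⁅commutator G, (⊤ : Subgroup G)⁆, ν x = 0 := by
  set γ := ⁅commutator G, (⊤ : Subgroup G)⁆
  have hle : γ ≤ commutator G := commutator_le_left _ _
  have hker (ψ : G →* Multiplicative (ZMod p)) : γ ≤ ψ.ker :=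
    hle.trans (Abelianization.commutator_subset_ker ψ)
  have hne : commutator (G ⧸ γ) ≠ ⊥ := fun h ↦ not_commutator_le_commutator_commutator hG' <| by
    rwa [← map_mk_commutator, Subgroup.map_eq_bot_iff, QuotientGroup.ker_mk'] at h
  have hexp (x : G ⧸ γ) : x ^ p = 1 := by
    obtain ⟨x, rfl⟩ := QuotientGroup.mk'_surjective γ x
    exact (QuotientGroup.eq_one_iff (x ^ p)).2 (hpow x)
  obtain ⟨ν, hν⟩ := exists_heisenberg_cocycle (commutator_quotient_le_center le_rfl) hne
    ((index_commutator_quotient hle).trans hindex) (surjective_lift_prod hχμ (hker χ) (hker μ)) hexp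
  refine ⟨fun x ↦ ν x, fun x y ↦ hν x y, fun x hx ↦ ?_⟩
  have h1 : ν 1 = 0 := by simpa using hν 1 1
  change ν (x : G ⧸ γ) = 0
  rwa [(QuotientGroup.eq_one_iff x).2 hx]

theorem not_innerOfPowEqOne_of_odd [Finite G] (hp2 : p ≠ 2) (hthin : IsCentrallyThin p G)
    (hG : IsPGroup p G) (hG' : commutator G ≠ ⊥) : ¬ InnerOfPowEqOne p G := fun hI ↦ by
  have := hG.isNilpotent
  have hGcyc := not_isCyclic_of_commutator_ne_bot hG'
  have hindex := hthin.index_commutator hG hGcyc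
  obtain ⟨hcard, hcyc⟩ := hI.card_center hthin hG hG'
  obtain ⟨g, hg, hgp, hgc⟩ := exists_pow_eq_one_notMem_center hp2 hcard (hthin _ hcyc)
  obtain ⟨z, ⟨hzG, hz⟩, hzp⟩ := exists_mem_inf_center_orderOf_eq hG hG'
  have hz1 : z ≠ 1 := fun h ↦ (Fact.out : p.Prime).ne_one (by rw [← hzp, h, orderOf_one])
  have hzc := zpowers_eq_of_mem_of_card_eq hz hz1 hcard
  have hzpow : z ^ p = 1 := hzp ▸ pow_orderOf_eq_one z
  obtain ⟨χ, hχ⟩ := exists_isCommutatorCharacter hz hzp fun x ↦ hzc ▸ hg x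
  have hker (ψ : G →* Multiplicative (ZMod p)) := Abelianization.commutator_subset_ker ψ
  have hχsurj := hχ.surjective hgc
  obtain ⟨h, hh⟩ := hI.exists_commutator_eq_of_odd hp2 hz hzpow hgp hχ (hker χ hzG)
    (hχ.apply_self hzp)
  have hgG : g ∈ commutator G := by
    obtain ⟨x, hx⟩ := hχsurj (Multiplicative.ofAdd 1)
    have hxh : ⁅x⁻¹, h⁆ = g := by simpa [hx, ZMod.val_one] using hh x
    exact hxh ▸ commutator_mem_commutator (mem_top _) (mem_top _)
  have hγ : ⁅commutator G, (⊤ : Subgroup G)⁆ ≠ ⊥ := fun hγ ↦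
    hgc (commutator_top_right_eq_bot_iff_le_center.1 hγ hgG)
  have hcγ := center_le_of_card_center_eq hG hcard hγ
  have hgγ := mem_commutator_commutator_of_mem_upperCentralSeriesStep hG hG' hindex hcγ hcyc hg
  obtain ⟨μ, hχμ⟩ := exists_surjective_prod_of_not_isCyclic hG hGcyc hχsurj
  obtain ⟨ν, hν, hνγ⟩ := exists_cocycle_of_pow_mem_commutator_commutator hG' hindex hχμ
    (pow_mem_commutator_commutator hG hG' hindex hcγ hcyc)
  obtain ⟨h', hh'⟩ := hI.exists_commutator_eq_pow_mul_pow hz hzpow hgp hχ hν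
    (hker μ hzG) (hker μ hgG) (hνγ z (hcγ hz)) (hνγ g hgγ)
  have hcG : center G ≤ commutator G := hcγ.trans (commutator_le_left _ _)
  exact hcyc (isCyclic_center_quotient_of_commutator_eq hthin hg (hgp ▸ one_mem _) hgc hχμ
    (hcG.trans (hker χ)) (hcG.trans (hker μ)) (fun x ↦ ⟨_, pow_mem hz _, hh x⟩)
    fun x ↦ ⟨_, pow_mem hz _, hh' x⟩)

end Odd

end ThinPGroup

theorem thin_p_group_has_noninner_automorphism_of_order_p_general
    {p : ℕ} [Fact p.Prime] {G : Type*} [Group G] [Finite G]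
    (hpG : IsPGroup p G) (hthin : ThinPGroup.IsCentrallyThin p G) (hcard : p ^ 2 ≤ Nat.card G) :
    ∃ φ : MulAut G, orderOf φ = p ∧ ¬ ∃ g : G, ∀ x : G, φ x = g⁻¹ * x * g := by
  refine ThinPGroup.exists_noninner_mulAut_of_not_innerOfPowEqOne fun hI ↦ ?_
  have hG' := hI.commutator_ne_bot hpG hcard
  rcases eq_or_ne p 2 with rfl | hp2
  · exact ThinPGroup.not_innerOfPowEqOne_two hthin hpG hG' hI
  · exact ThinPGroup.not_innerOfPowEqOne_of_odd hp2 hthin hpG hG' hI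

/-- Every finite thin `p`-group of order at least `p ^ 2` has a non-inner automorphism
of order exactly `p`. -/
theorem thin_p_group_has_noninner_automorphism_of_order_p
    {p : ℕ} (hp : p.Prime) (G : Type*) [Group G] [Finite G]
    (hpG : IsPGroup p G) (hthin : IsThinPGroup p G) (hcard : p ^ 2 ≤ Nat.card G) :
    ∃ φ : MulAut G, orderOf φ = p ∧ ¬ ∃ g : G, ∀ x : G, φ x = g⁻¹ * x * g := by
  have := Fact.mk hp
  exact thin_p_group_has_noninner_automorphism_of_order_p_general hpG
    (hthin.isCentrallyThin hpG) hcard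
end

section
/- Every finite thin p-group (p prime) is generated by at most 2 elements. -/
/-!
If no pair of elements generates `G`, then every pair lies in a common maximal subgroup `M`, so
`G × G` is the union of the subgroups `M × M`. By B. H. Neumann's lemma on coset coverings,
`1 ≤ ∑ 1 / [G : M] ^ 2`. But the maximal subgroups of a finite `p`-group are normal of index at
least `p`, and if `G` is thin there are at most `p + 1 < p ^ 2` of them, since they are pairwise
incomparable.
-/

theorem isAntichain_setOf_isCoatom (α : Type*) [PartialOrder α] [OrderTop α] :
    IsAntichain (· ≤ ·) {a : α | IsCoatom a} :=
  fun _ ha _ hb hne hle ↦ hne ((ha.le_iff_eq hb.ne_top).1 hle).symm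

section CoveringByPowers

variable {G : Type*} [Group G] {ι : Type*}

theorem biUnion_pi_eq_univ_of_forall_closure_range_ne_top {s : Set (Subgroup G)}
    (hs : ∀ H : Subgroup G, H ≠ ⊤ → ∃ M ∈ s, H ≤ M)
    (hG : ∀ f : ι → G, Subgroup.closure (Set.range f) ≠ ⊤) :
    ⋃ M ∈ s, (Subgroup.pi Set.univ fun _ : ι ↦ M : Set (ι → G)) = Set.univ := by
  refine Set.eq_univ_of_forall fun f ↦ ?_
  obtain ⟨M, hMs, hM⟩ := hs _ (hG f)
  exact Set.mem_biUnion hMs fun i _ ↦ hM (Subgroup.subset_closure ⟨i, rfl⟩)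

variable [Fintype ι]

open scoped Pointwise in
theorem exists_closure_range_eq_top_of_sum_inv_index_pow_lt_one {s : Finset (Subgroup G)}
    (hs : ∀ H : Subgroup G, H ≠ ⊤ → ∃ M ∈ s, H ≤ M)
    (hsum : ∑ M ∈ s, ((M.index : ℚ) ^ Fintype.card ι)⁻¹ < 1) :
    ∃ f : ι → G, Subgroup.closure (Set.range f) = ⊤ := by
  by_contra! hG
  have hcover : ⋃ M ∈ s, (1 : ι → G) • (Subgroup.pi Set.univ fun _ : ι ↦ M : Set (ι → G)) =
      Set.univ := by
    simpa only [one_smul] using! biUnion_pi_eq_univ_of_forall_closure_range_ne_top hs hG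
  have hle := Subgroup.one_le_sum_inv_index_of_leftCoset_cover hcover
  simp only [Subgroup.index_pi, Finset.prod_const, Finset.card_univ, Nat.cast_pow] at hle
  exact hle.not_gt hsum

theorem exists_closure_range_eq_top_of_ncard_isCoatom_lt [IsCoatomic (Subgroup G)] {n : ℕ}
    (hn : 0 < n) (hfin : {M : Subgroup G | IsCoatom M}.Finite)
    (hindex : ∀ M : Subgroup G, IsCoatom M → n ≤ M.index)
    (hcard : {M : Subgroup G | IsCoatom M}.ncard < n ^ Fintype.card ι) :
    ∃ f : ι → G, Subgroup.closure (Set.range f) = ⊤ := by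
  refine exists_closure_range_eq_top_of_sum_inv_index_pow_lt_one (s := hfin.toFinset)
    (fun H hH ↦ ?_) ?_
  · simpa using (eq_top_or_exists_le_coatom H).resolve_left hH
  · rw [Set.ncard_eq_toFinset_card _ hfin] at hcard
    calc ∑ M ∈ hfin.toFinset, ((M.index : ℚ) ^ Fintype.card ι)⁻¹
        ≤ ∑ _M ∈ hfin.toFinset, ((n : ℚ) ^ Fintype.card ι)⁻¹ := by
          refine Finset.sum_le_sum fun M hM ↦ ?_
          have := hindex M (hfin.mem_toFinset.1 hM)
          gcongr
      _ = hfin.toFinset.card / (n : ℚ) ^ Fintype.card ι := by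
          rw [Finset.sum_const, nsmul_eq_mul, div_eq_mul_inv]
      _ < 1 := by
          rw [div_lt_one (by positivity)]
          exact_mod_cast hcard

end CoveringByPowers

theorem le_index_of_isPGroup {p : ℕ} [Fact p.Prime] {G : Type*} [Group G] (hG : IsPGroup p G)
    {H : Subgroup G} [H.FiniteIndex] (hH : H ≠ ⊤) : p ≤ H.index := by
  obtain ⟨n, hn⟩ := hG.index H
  rw [hn]
  exact Nat.le_self_pow (fun h0 ↦ hH (Subgroup.index_eq_one.1 (by rw [hn, h0, pow_zero]))) p

namespace IsThinPGroup

variable {p : ℕ} {G : Type*} [Group G]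

/-- `Set.ncard` vanishes on infinite sets, so thinness is applied to a finite subset of `S`. -/
theorem finite_of_isAntichain (hthin : IsThinPGroup p G) {S : Set (Subgroup G)}
    (hnormal : ∀ N ∈ S, N.Normal) (hS : IsAntichain (· ≤ ·) S) : S.Finite := by
  by_contra hinf
  obtain ⟨T, hTS, -, hT⟩ := Set.Infinite.exists_subset_ncard_eq hinf (p + 2)
  have := hthin T (fun N hN ↦ hnormal N (hTS hN)) (hS.subset hTS)
  lia

end IsThinPGroup

theorem thin_p_group_two_generated_general {p : ℕ} (hp : 2 ≤ p) {G : Type*} [Group G]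
    [IsCoatomic (Subgroup G)] (hnormal : ∀ M : Subgroup G, IsCoatom M → M.Normal)
    (hindex : ∀ M : Subgroup G, IsCoatom M → p ≤ M.index) (hthin : IsThinPGroup p G) :
    ∃ a b : G, Subgroup.closure {a, b} = ⊤ := by
  have hanti := isAntichain_setOf_isCoatom (Subgroup G)
  have hcard : {M : Subgroup G | IsCoatom M}.ncard < p ^ Fintype.card (Fin 2) := by
    calc {M : Subgroup G | IsCoatom M}.ncard ≤ p + 1 := hthin _ hnormal hanti
      _ < p ^ Fintype.card (Fin 2) := by rw [Fintype.card_fin]; nlinarith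
  obtain ⟨f, hf⟩ := exists_closure_range_eq_top_of_ncard_isCoatom_lt (by lia)
    (hthin.finite_of_isAntichain hnormal hanti) hindex hcard
  exact ⟨f 0, f 1, by simpa [Fin.range_fin_succ, Set.range_unique, Fin.tail] using hf⟩

/-- Every finite thin `p`-group is generated by at most two elements. -/
theorem thin_p_group_two_generated
    {p : ℕ} (hp : p.Prime) {G : Type*} [Group G] [Finite G]
    (hpG : IsPGroup p G) (hthin : IsThinPGroup p G) :
    ∃ a b : G, Subgroup.closure {a, b} = ⊤ := by
  have : Fact p.Prime := ⟨hp⟩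
  have : Group.IsNilpotent G := hpG.isNilpotent
  exact thin_p_group_two_generated_general hp.two_le
    (fun M ↦ Subgroup.NormalizerCondition.normal_of_coatom M
      Group.normalizerCondition_of_isNilpotent)
    (fun _ hM ↦ le_index_of_isPGroup hpG hM.ne_top) hthin
end

section
/- Let p be a prime, let n ≥ 2, and let G be a finite p-group of order p^n and nilpotency class n−1 (i.e., of maximal class). Then G is thin: every antichain in the lattice of normal subgroups of G contains at most p+1 elements. -/
/-!
Write `γ` for the lower central series, starting at `γ 0 = G`. A normal subgroup whose index divides
`p ^ (k + 1)`, `k ≥ 1`, contains `γ k`, because the quotient has class at most `k`. In a group of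
maximal class `γ k` itself has index dividing `p ^ (k + 1)`, so it is the only normal subgroup of
index `p ^ (k + 1)`, and it lies below every normal subgroup of smaller or equal index. Hence
incomparable normal subgroups all have index `p`. The intersection `K` of two of them has index
`p ^ 2`, so it lies below all the others, and `G ⧸ K`, having order `p ^ 2`, has at most `p + 1`
subgroups of index `p`.
-/

open Subgroup

section SubgroupsOfPrimeIndex

variable {p : ℕ} [Fact p.Prime] {G : Type*} [Group G]

theorem index_dvd_prime_pow_of_lt {H K : Subgroup G} {m : ℕ} (hHK : H < K)
    (hH : H.index ∣ p ^ (m + 1)) : K.index ∣ p ^ m := by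
  have hp : p.Prime := Fact.out
  have : H.FiniteIndex := ⟨ne_zero_of_dvd_ne_zero (pow_ne_zero _ hp.ne_zero) hH⟩
  obtain ⟨a, ham, ha⟩ := (Nat.dvd_prime_pow hp).1 hH
  obtain ⟨b, -, hb⟩ := (Nat.dvd_prime_pow hp).1 ((index_dvd_of_le hHK.le).trans hH)
  have hba : p ^ b < p ^ a := hb ▸ ha ▸ index_strictAnti hHK
  have hbm : b < m + 1 := ((Nat.pow_lt_pow_iff_right hp.one_lt).1 hba).trans_le ham
  exact hb ▸ pow_dvd_pow p (Nat.le_of_lt_succ hbm)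

theorem index_inf_of_normal_of_index_eq_prime {N M : Subgroup G} [N.Normal] (hN : N.index = p)
    (hMN : ¬M ≤ N) : (N ⊓ M).index = p * M.index := by
  have hrel : N.relIndex M = p :=
    ((Nat.dvd_prime Fact.out).1 (hN ▸ relIndex_dvd_index_of_normal N M)).resolve_left
      (mt relIndex_eq_one.1 hMN)
  rw [← relIndex_mul_index (inf_le_right : N ⊓ M ≤ M), inf_relIndex_right, hrel]

theorem zpowers_eq_of_mem_of_card_eq_prime {A : Subgroup G} {x : G} (hA : Nat.card A = p)
    (hx : x ∈ A) (hx1 : x ≠ 1) : zpowers x = A := by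
  have : Finite A := Nat.finite_of_card_ne_zero (hA ▸ (Fact.out : p.Prime).ne_zero)
  have horder : orderOf x = p :=
    ((Nat.dvd_prime Fact.out).1 (hA ▸ A.orderOf_dvd_natCard hx)).resolve_left
      (mt orderOf_eq_one_iff.1 hx1)
  exact eq_of_le_of_card_ge (zpowers_le_of_mem hx) (by rw [hA, Nat.card_zpowers, horder])

variable (p G) in
theorem ncard_card_eq_prime_mul_le [Finite G] :
    {A : Subgroup G | Nat.card A = p}.ncard * (p - 1) ≤ Nat.card G - 1 := by
  classical
  have := Fintype.ofFinite G
  -- Each `A` contains `p - 1` elements `x ≠ 1`, and each such `x` generates the `A` containing it.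
  have hdouble := Finset.card_mul_le_card_mul (fun (A : Subgroup G) x ↦ x ∈ A)
    (s := {A : Subgroup G | Nat.card A = p}.toFinset) (t := Finset.univ.erase (1 : G))
    (m := p - 1) (n := 1) ?_ ?_
  · rwa [mul_one, Finset.card_erase_of_mem (Finset.mem_univ _), Finset.card_univ,
      ← Nat.card_eq_fintype_card, ← Set.ncard_eq_toFinset_card'] at hdouble
  · intro A hA
    have hnontrivial : (Finset.univ.erase (1 : G)).bipartiteAbove (fun A x ↦ x ∈ A) A =
        (A : Set G).toFinset.erase 1 := by
      ext x
      simp [Finset.bipartiteAbove]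
    rw [hnontrivial, Finset.card_erase_of_mem (by simp), ← Set.ncard_eq_toFinset_card']
    exact Nat.sub_le_sub_right (Set.mem_toFinset.1 hA).ge 1
  · intro x hx
    refine Finset.card_le_one.2 fun A hA B hB ↦ ?_
    simp only [Finset.mem_bipartiteBelow, Set.mem_toFinset, Set.mem_ofPred_eq] at hA hB
    have hx1 := Finset.ne_of_mem_erase hx
    exact (zpowers_eq_of_mem_of_card_eq_prime hA.1 hA.2 hx1).symm.trans
      (zpowers_eq_of_mem_of_card_eq_prime hB.1 hB.2 hx1)

theorem ncard_card_eq_prime_le (hG : Nat.card G = p ^ 2) :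
    {A : Subgroup G | Nat.card A = p}.ncard ≤ p + 1 := by
  have hp : p.Prime := Fact.out
  have : Finite G := Nat.finite_of_card_ne_zero (hG ▸ pow_ne_zero 2 hp.ne_zero)
  refine Nat.le_of_mul_le_mul_right ?_ (Nat.sub_pos_of_lt hp.one_lt)
  calc
    _ ≤ Nat.card G - 1 := ncard_card_eq_prime_mul_le p G
    _ = (p + 1) * (p - 1) := by rw [hG, ← Nat.sq_sub_sq, one_pow]

theorem ncard_index_eq_prime_le {K : Subgroup G} [K.Normal] (hK : K.index = p ^ 2) :
    {N : Subgroup G | K ≤ N ∧ N.index = p}.ncard ≤ p + 1 := by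
  have hp : p.Prime := Fact.out
  have : K.FiniteIndex := ⟨hK ▸ pow_ne_zero 2 hp.ne_zero⟩
  refine (Set.ncard_le_ncard_of_injOn (map (QuotientGroup.mk' K)) ?_ ?_).trans
    (ncard_card_eq_prime_le (G := G ⧸ K) hK)
  · rintro N ⟨hKN, hN⟩
    have hindex : (N.map (QuotientGroup.mk' K)).index = p := by
      rw [index_map_eq _ (QuotientGroup.mk'_surjective K) (by rwa [QuotientGroup.ker_mk']), hN]
    have hmul := (N.map (QuotientGroup.mk' K)).card_mul_index
    rw [hindex, ← index_eq_card, hK, sq] at hmul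
    exact Nat.eq_of_mul_eq_mul_right hp.pos hmul
  · rintro N ⟨hKN, -⟩ M ⟨hKM, -⟩ hNM
    exact map_injective_of_ker_le _ (by rwa [QuotientGroup.ker_mk'])
      (by rwa [QuotientGroup.ker_mk']) hNM

end SubgroupsOfPrimeIndex

section LowerCentralSeries

variable {p : ℕ} [Fact p.Prime] {G : Type*} [Group G]

theorem card_quotient_center_dvd_prime_pow [Nontrivial G] {m : ℕ}
    (hG : Nat.card G ∣ p ^ (m + 1)) : Nat.card (G ⧸ center G) ∣ p ^ m := by
  obtain ⟨a, -, ha⟩ := (Nat.dvd_prime_pow Fact.out).1 hG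
  have : Finite G := Nat.finite_of_card_ne_zero (ha ▸ pow_ne_zero a (NeZero.ne p))
  rw [← index_eq_card]
  exact index_dvd_prime_pow_of_lt (IsPGroup.of_card ha).bot_lt_center (by rwa [index_bot])

theorem isMulCommutative_of_card_dvd_prime_sq (hG : Nat.card G ∣ p ^ 2) : IsMulCommutative G := by
  cases subsingleton_or_nontrivial G
  · exact ⟨⟨fun _ _ ↦ Subsingleton.elim _ _⟩⟩
  · have : IsCyclic (G ⧸ center G) :=
      isCyclic_of_card_dvd_prime (pow_one p ▸ card_quotient_center_dvd_prime_pow hG)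
    exact isMulCommutative_of_isCyclic_quotient_center_self G

theorem nilpotencyClass_le_of_card_dvd_prime_pow {k : ℕ} (hk : 1 ≤ k)
    (hG : Nat.card G ∣ p ^ (k + 1)) : Group.nilpotencyClass G ≤ k := by
  induction k, hk using Nat.le_induction generalizing G with
  | base =>
    have := isMulCommutative_of_card_dvd_prime_sq hG
    let : CommGroup G := { mul_comm := this.is_comm.comm }
    exact CommGroup.nilpotencyClass_le_one
  | succ k _ ih =>
    cases subsingleton_or_nontrivial G
    · simp [Group.nilpotencyClass_zero_iff_subsingleton.2 ‹_›]
    · rw [← Nat.sub_le_iff_le_add, ← Group.nilpotencyClass_quotient_center]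
      exact ih (card_quotient_center_dvd_prime_pow hG)

theorem lowerCentralSeries_le_of_index_dvd_prime_pow {N : Subgroup G} [N.Normal] {k : ℕ}
    (hk : 1 ≤ k) (hN : N.index ∣ p ^ (k + 1)) : (⊤ : Subgroup G).lowerCentralSeries k ≤ N := by
  obtain ⟨a, -, ha⟩ := (Nat.dvd_prime_pow Fact.out).1 hN
  have : Finite (G ⧸ N) := Nat.finite_of_card_ne_zero
    (by rw [← index_eq_card, ha]; exact pow_ne_zero a (NeZero.ne p))
  have : Group.IsNilpotent (G ⧸ N) := (IsPGroup.of_card (n := a) ha).isNilpotent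
  have hquot : (⊤ : Subgroup (G ⧸ N)).lowerCentralSeries k = ⊥ :=
    Subgroup.lowerCentralSeries_eq_bot_iff_nilpotencyClass_le.2
      (nilpotencyClass_le_of_card_dvd_prime_pow hk hN)
  rwa [← map_top_of_surjective _ (QuotientGroup.mk'_surjective N), ← map_lowerCentralSeries,
    Subgroup.map_eq_bot_iff, QuotientGroup.ker_mk'] at hquot

theorem lowerCentralSeries_succ_lt [Group.IsNilpotent G] {k : ℕ}
    (hk : k < Group.nilpotencyClass G) :
    (⊤ : Subgroup G).lowerCentralSeries (k + 1) < (⊤ : Subgroup G).lowerCentralSeries k := by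
  refine (Subgroup.lowerCentralSeries_antitone _ k.le_succ).lt_of_ne fun hstable ↦ hk.not_ge ?_
  have hle (m : ℕ) (hm : k ≤ m) :
      (⊤ : Subgroup G).lowerCentralSeries k ≤ (⊤ : Subgroup G).lowerCentralSeries m := by
    induction m, hm using Nat.le_induction with
    | base => exact le_rfl
    | succ m _ ih => exact hstable ▸ commutator_mono ih le_rfl
  rw [← Subgroup.lowerCentralSeries_eq_bot_iff_nilpotencyClass_le, eq_bot_iff,
    ← Subgroup.lowerCentralSeries_nilpotencyClass]
  exact hle _ hk.le

end LowerCentralSeries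

/-- `G` is a `p`-group of maximal class: its order is `p ^ (c + 1)`, where `c` is its nilpotency
class. Orders `1` and `p` are excluded. The junk value `c = 0` of a non-nilpotent group does no
harm, since groups of prime power order are nilpotent. -/
def IsMaximalClass (p : ℕ) (G : Type*) [Group G] : Prop :=
  Nat.card G = p ^ (Group.nilpotencyClass G + 1)

namespace IsMaximalClass

variable {p : ℕ} [Fact p.Prime] {G : Type*} [Group G]

theorem finite (hG : IsMaximalClass p G) : Finite G :=
  Nat.finite_of_card_ne_zero (hG ▸ pow_ne_zero _ (NeZero.ne p))

theorem exists_index_eq_pow (hG : IsMaximalClass p G) (N : Subgroup G) :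
    ∃ i ≤ Group.nilpotencyClass G + 1, N.index = p ^ i :=
  (Nat.dvd_prime_pow Fact.out).1 (hG ▸ N.index_dvd_card)

theorem index_lowerCentralSeries_dvd (hG : IsMaximalClass p G) {k : ℕ}
    (hk : k ≤ Group.nilpotencyClass G) :
    ((⊤ : Subgroup G).lowerCentralSeries k).index ∣ p ^ (k + 1) := by
  have := hG.finite
  have := (IsPGroup.of_card hG).isNilpotent
  induction hk using Nat.decreasingInduction with
  | self => rw [Subgroup.lowerCentralSeries_nilpotencyClass, index_bot, hG]
  | of_succ k hk ih => exact index_dvd_prime_pow_of_lt (lowerCentralSeries_succ_lt hk) ih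

theorem eq_lowerCentralSeries_of_index_eq (hG : IsMaximalClass p G) {N : Subgroup G} [N.Normal]
    {k : ℕ} (hk : 1 ≤ k) (hN : N.index = p ^ (k + 1)) :
    N = (⊤ : Subgroup G).lowerCentralSeries k := by
  have := hG.finite
  obtain ⟨i, hi, hNi⟩ := hG.exists_index_eq_pow N
  obtain rfl : i = k + 1 := Nat.pow_right_injective (Fact.out : p.Prime).two_le (hNi.symm.trans hN)
  have hle := lowerCentralSeries_le_of_index_dvd_prime_pow hk hN.dvd
  by_contra hne
  refine (index_strictAnti (hle.lt_of_ne' hne)).not_ge (hN ▸ Nat.le_of_dvd ?_ ?_)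
  · exact pow_pos (NeZero.pos p) _
  · exact hG.index_lowerCentralSeries_dvd (Nat.succ_le_succ_iff.1 hi)

theorem le_of_index_eq_pow (hG : IsMaximalClass p G) {N M : Subgroup G} [N.Normal] [M.Normal]
    {i j : ℕ} (hN : N.index = p ^ i) (hM : M.index = p ^ j) (hi : 2 ≤ i) (hji : j ≤ i) :
    N ≤ M := by
  obtain ⟨k, rfl⟩ := Nat.exists_eq_add_of_le' (one_le_two.trans hi)
  have hk : 1 ≤ k := Nat.succ_le_succ_iff.1 hi
  rw [hG.eq_lowerCentralSeries_of_index_eq hk hN]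
  exact lowerCentralSeries_le_of_index_dvd_prime_pow hk (hM ▸ pow_dvd_pow p hji)

theorem index_eq_of_incomparable (hG : IsMaximalClass p G) {N M : Subgroup G} [N.Normal]
    [M.Normal] (hNM : ¬N ≤ M) (hMN : ¬M ≤ N) : N.index = p := by
  obtain ⟨i, -, hN⟩ := hG.exists_index_eq_pow N
  obtain ⟨j, -, hM⟩ := hG.exists_index_eq_pow M
  have hi0 : i ≠ 0 := by
    rintro rfl
    exact hMN (index_eq_one.1 hN ▸ le_top)
  have hij : 2 ≤ i → i < j := fun hi ↦ not_le.1 (mt (hG.le_of_index_eq_pow hN hM hi) hNM)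
  have hji : 2 ≤ j → j < i := fun hj ↦ not_le.1 (mt (hG.le_of_index_eq_pow hM hN hj) hMN)
  obtain rfl : i = 1 := by omega
  rw [hN, pow_one]

theorem isThinPGroup (hG : IsMaximalClass p G) : IsThinPGroup p G := by
  intro S hnormal hanti
  have := hG.finite
  obtain hS | hS := le_or_gt S.ncard 1
  · exact hS.trans (Nat.le_add_left 1 p)
  obtain ⟨N, hN, M, hM, hNM⟩ := (Set.one_lt_ncard S.toFinite).1 hS
  have hindex (L : Subgroup G) (hL : L ∈ S) : L.index = p := by
    obtain ⟨L', hL', hne⟩ := Set.exists_ne_of_one_lt_ncard hS L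
    have := hnormal L hL
    have := hnormal L' hL'
    exact hG.index_eq_of_incomparable (hanti hL hL' hne.symm) (hanti hL' hL hne)
  have := hnormal N hN
  have := hnormal M hM
  have hinf : (N ⊓ M).index = p ^ 2 := by
    rw [index_inf_of_normal_of_index_eq_prime (hindex N hN) (hanti hM hN hNM.symm), hindex M hM, sq]
  refine (Set.ncard_le_ncard fun L hL ↦ ?_).trans (ncard_index_eq_prime_le hinf)
  have := hnormal L hL
  have hL_pow : L.index = p ^ 1 := (hindex L hL).trans (pow_one p).symm
  exact ⟨hG.le_of_index_eq_pow hinf hL_pow le_rfl one_le_two, hindex L hL⟩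

end IsMaximalClass

/-- Every finite `p`-group of maximal class (order `p ^ n`, `n ≥ 2`, nilpotency class
`n - 1`) is thin. -/
theorem maximal_class_is_thin
    {p n : ℕ} (hp : p.Prime) (hn : 2 ≤ n) {G : Type*} [Group G] [Finite G]
    [Group.IsNilpotent G]
    (hpG : IsPGroup p G) (hcard : Nat.card G = p ^ n)
    (hclass : Group.nilpotencyClass G = n - 1) :
    IsThinPGroup p G := by
  have : Fact p.Prime := ⟨hp⟩
  have hn' : n - 1 + 1 = n := Nat.sub_add_cancel (one_le_two.trans hn)
  have hG : IsMaximalClass p G := by rw [IsMaximalClass, hclass, hn', hcard]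
  exact hG.isThinPGroup
end

section
/- Every nonabelian finite thin 2-group is of maximal class; that is, if G is a nonabelian finite 2-group of order 2^n in which every antichain of normal subgroups has at most 3 elements, then the nilpotency class of G equals n−1. -/
/-!
Let `G` be a nonabelian thin `p`-group, so that its abelianization `B` is not cyclic. The subgroups
of order `p` of `B` form an antichain, hence there are at most `p + 1` of them. If `x : B` had order
`p ^ 2` and `y ∉ ⟨x⟩` had order `p`, then exchanging `⟨x ^ p⟩` for the two subgroups `⟨x⟩` and
`⟨x * y⟩` would again give an antichain, leaving at most `p` subgroups of order `p`: too few, since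
`B` is not cyclic. So `B` is elementary abelian of order at most `p ^ 2`.

For `p = 2` this is the hypothesis of Taussky's theorem. Let `z ∈ G'` be central of order `2`. By
induction `G / ⟨z⟩` has a cyclic subgroup of index `2`, which lifts to an abelian subgroup `⟨x, z⟩`,
and `G'` is generated by a single commutator `w = ⁅x, y⁆`. Unless `G' = ⟨z⟩`, `z` is a power of
`w ^ 2`, which lies in `⟨x⟩` because `z ^ 2 = 1`; thus `⟨x⟩` has index `2` in `G`.

Finally, if `A` is an abelian subgroup of index `p` and `y ∉ A`, then `a ↦ ⁅a, y⁆` maps `A` onto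
`G'` with kernel containing the center, so `|G : G'| ≤ p ^ 2` forces the center to have order `p`.
The same holds for `G / Z(G)` as long as it is nonabelian, so by induction the class is maximal.
-/

open Subgroup
open scoped commutatorElement

section Group

variable {G : Type*} [Group G]

theorem le_centralizer_of_le_center (H : Subgroup G) {K : Subgroup G} (hK : K ≤ center G) :
    H ≤ centralizer K :=
  le_centralizer_iff.mp (hK.trans (center_le_centralizer _))

theorem normal_of_le_center {N : Subgroup G} (h : N ≤ center G) : N.Normal :=
  ⟨fun n hn g => by rwa [mem_center_iff.mp (h hn) g, mul_inv_cancel_right]⟩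

theorem isMulCommutative_sup {H K : Subgroup G} [IsMulCommutative H]
    [IsMulCommutative K] (h : H ≤ centralizer K) : IsMulCommutative ↥(H ⊔ K) := by
  refine le_centralizer_iff_isMulCommutative.mp ?_
  have hH : H ⊔ K ≤ centralizer H := sup_le H.le_centralizer (le_centralizer_iff.mp h)
  have hK : H ⊔ K ≤ centralizer K := sup_le h K.le_centralizer
  exact sup_le (le_centralizer_iff.mp hH) (le_centralizer_iff.mp hK)

theorem isMulCommutative_of_sup_eq_top {H K : Subgroup G}
    [IsMulCommutative H] [IsMulCommutative K] (h : H ≤ centralizer K) (htop : H ⊔ K = ⊤) :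
    IsMulCommutative G := by
  have hcomm := isMulCommutative_sup h
  rw [htop, ← le_centralizer_iff_isMulCommutative, coe_top, centralizer_univ] at hcomm
  exact center_eq_top_iff.mp (top_le_iff.mp hcomm)

theorem mem_zpowers_pow_of_pow_eq_one {x g : G} {m n : ℕ} (hm : m ≠ 0)
    (hx : orderOf x = n * m) (hg : g ∈ zpowers x) (hgm : g ^ m = 1) :
    g ∈ zpowers (x ^ n) := by
  obtain ⟨k, rfl⟩ := hg
  have hdvd : (n : ℤ) * m ∣ k * m := by
    rw [← Nat.cast_mul, ← hx, orderOf_dvd_iff_zpow_eq_one, zpow_mul, zpow_natCast, hgm]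
  obtain ⟨j, rfl⟩ := Int.dvd_of_mul_dvd_mul_right (Nat.cast_ne_zero.mpr hm) hdvd
  exact ⟨j, by simp only [zpow_mul, zpow_natCast]⟩

theorem orderOf_pow_of_orderOf_eq_mul {x : G} {m n : ℕ} (hn : n ≠ 0)
    (hx : orderOf x = n * m) : orderOf (x ^ n) = m := by
  rw [orderOf_pow_of_dvd hn (hx ▸ dvd_mul_right n m), hx,
    Nat.mul_div_cancel_left m (Nat.pos_of_ne_zero hn)]

theorem eq_zpowers_pow_of_le_zpowers {x : G} {P : Subgroup G}
    {m n : ℕ} (hm : m ≠ 0) (hn : n ≠ 0) (hx : orderOf x = n * m) (hP : Nat.card P = m)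
    (hle : P ≤ zpowers x) : P = zpowers (x ^ n) := by
  have hcard : Nat.card (zpowers (x ^ n)) = m :=
    (Nat.card_zpowers _).trans (orderOf_pow_of_orderOf_eq_mul hn hx)
  have : Finite (zpowers (x ^ n)) := Nat.finite_of_card_ne_zero (hcard ▸ hm)
  refine eq_of_le_of_card_ge (fun g hg => mem_zpowers_pow_of_pow_eq_one hm hx (hle hg) ?_)
    (hcard.trans hP.symm).le
  exact orderOf_dvd_iff_pow_eq_one.mp (hP ▸ P.orderOf_dvd_natCard hg)

end Group

section Maximal

variable {G : Type*} [Group G] {M : Subgroup G}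

theorem isCoatom_of_prime_index (hM : M.index.Prime) : IsCoatom M := by
  refine ⟨fun h => Nat.not_prime_one (by simpa [h] using hM), fun K hMK => ?_⟩
  have hprime : (M.relIndex K * K.index).Prime := by rwa [relIndex_mul_index hMK.le]
  rcases Nat.prime_mul_iff.mp hprime with ⟨-, hK⟩ | ⟨-, hK⟩
  · exact index_eq_one.mp hK
  · exact absurd (relIndex_eq_one.mp hK) hMK.not_ge

theorem sup_zpowers_eq_top_of_isCoatom (hM : IsCoatom M) {y : G} (hy : y ∉ M) :
    M ⊔ zpowers y = ⊤ :=
  hM.2 _ (left_lt_sup.mpr (by simpa only [zpowers_le] using hy))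

theorem normal_of_isCoatom [Group.IsNilpotent G] (hM : IsCoatom M) : M.Normal :=
  NormalizerCondition.normal_of_coatom M Group.normalizerCondition_of_isNilpotent hM

theorem commutator_le_frattini [Group.IsNilpotent G] : commutator G ≤ frattini G := by
  refine le_iInf₂ fun M hM => ?_
  have hMn : M.Normal := normal_of_isCoatom hM
  obtain ⟨y, -, hy⟩ := SetLike.exists_of_lt hM.lt_top
  exact hMn.commutator_le_of_self_sup_commutative_eq_top
    (sup_zpowers_eq_top_of_isCoatom hM hy) inferInstance

theorem isCyclic_of_isCyclic_abelianization [Group.IsNilpotent G] [IsCoatomic (Subgroup G)]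
    [IsCyclic (Abelianization G)] : IsCyclic G := by
  obtain ⟨x, hx⟩ := isCyclic_iff_exists_zpowers_eq_top.mp ‹IsCyclic (Abelianization G)›
  obtain ⟨g, rfl⟩ := QuotientGroup.mk_surjective x
  have hg : zpowers g ⊔ commutator G = ⊤ := by
    have := comap_map_eq (QuotientGroup.mk' (commutator G)) (zpowers g)
    rw [MonoidHom.map_zpowers, QuotientGroup.ker_mk'] at this
    rw [← this]
    exact (congrArg _ hx).trans (comap_top _)
  exact isCyclic_iff_exists_zpowers_eq_top.mpr ⟨g, frattini_nongenerating
    (top_le_iff.mp (hg.ge.trans (sup_le_sup_left commutator_le_frattini _)))⟩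

end Maximal

section PGroup

variable {p : ℕ} [hp : Fact p.Prime] {G : Type*} [Group G]

theorem exists_orderOf_eq_prime_sq (hG : IsPGroup p G)
    {g : G} (hg : g ^ p ≠ 1) : ∃ x : G, orderOf x = p ^ 2 := by
  obtain ⟨k, hk⟩ := IsPGroup.iff_orderOf.mp hG g
  have hk2 : 2 ≤ k := by
    by_contra! hlt
    exact hg (orderOf_dvd_iff_pow_eq_one.mp
      (hk ▸ (pow_dvd_pow p (Nat.le_of_lt_succ hlt)).trans (pow_one p).dvd))
  have hpos : 0 < orderOf g := hk ▸ Nat.pow_pos hp.out.pos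
  exact ⟨_, orderOf_pow_orderOf_div hpos.ne' (hk ▸ pow_dvd_pow p hk2)⟩

theorem orderOf_eq_prime_sq_of_pow_eq {x y : G} (hx : orderOf x = p ^ 2) (h : y ^ p = x ^ p) :
    orderOf y = p ^ 2 := by
  refine orderOf_eq_prime_pow ?_ ?_
  · rw [pow_one, h]
    exact pow_ne_one_of_lt_orderOf hp.out.ne_zero (hx ▸ lt_self_pow₀ hp.out.one_lt one_lt_two)
  · rw [pow_succ, pow_one, pow_mul, h, ← pow_mul, ← sq, ← hx, pow_orderOf_eq_one]

theorem zpowers_eq_or_mem_zpowers_pow [Finite G] (hG : IsPGroup p G) {w z : G}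
    (hz : z ∈ zpowers w) :
    zpowers z = zpowers w ∨ z ∈ zpowers (w ^ p) := by
  obtain ⟨j, rfl⟩ := mem_powers_iff_mem_zpowers.mpr hz
  by_cases hj : p ∣ j
  · obtain ⟨i, rfl⟩ := hj
    exact .inr ⟨i, by simp only [pow_mul, zpow_natCast]⟩
  · obtain ⟨k, hk⟩ := IsPGroup.iff_orderOf.mp hG w
    obtain ⟨m, hm⟩ := exists_pow_eq_self_of_coprime (x := w) (n := j)
      (hk ▸ ((hp.out.coprime_iff_not_dvd.mpr hj).symm.pow_right k))
    exact .inl (le_antisymm (zpowers_le.mpr hz)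
      (zpowers_le.mpr ⟨m, by simpa only [zpow_natCast] using hm⟩))

variable (G p) in
theorem ncard_setOf_pow_eq_one_le [Finite G] :
    {g : G | g ^ p = 1}.ncard ≤ 1 + (p - 1) * {P : Subgroup G | Nat.card P = p}.ncard := by
  let S := (Set.toFinite {P : Subgroup G | Nat.card P = p}).toFinset
  have hS (P : Subgroup G) : P ∈ S ↔ Nat.card P = p := Set.Finite.mem_toFinset _
  have hcover : {g : G | g ^ p = 1} ⊆ {1} ∪ ⋃ P ∈ S, (P : Set G) \ {1} := by
    intro g hg
    rw [Set.singleton_union, Set.mem_insert_iff, or_iff_not_imp_left]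
    intro hg1
    exact Set.mem_biUnion (x := zpowers g)
      ((hS _).mpr ((Nat.card_zpowers g).trans (orderOf_eq_prime_iff.mpr ⟨hg, hg1⟩)))
      ⟨mem_zpowers g, hg1⟩
  have hdiff : ∀ P ∈ S, ((P : Set G) \ {1}).ncard = p - 1 := fun P hP => by
    rw [Set.ncard_sdiff_singleton_of_mem P.one_mem, ← Nat.card_coe_set_eq]
    exact congrArg (· - 1) ((hS P).mp hP)
  calc {g : G | g ^ p = 1}.ncard
      ≤ ({1} ∪ ⋃ P ∈ S, (P : Set G) \ {1}).ncard := Set.ncard_le_ncard hcover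
    _ ≤ ({1} : Set G).ncard + (⋃ P ∈ S, (P : Set G) \ {1}).ncard := Set.ncard_union_le _ _
    _ ≤ 1 + ∑ P ∈ S, ((P : Set G) \ {1}).ncard :=
      Nat.add_le_add (Set.ncard_singleton _).le (S.set_ncard_biUnion_le _)
    _ = 1 + (p - 1) * {P : Subgroup G | Nat.card P = p}.ncard := by
      rw [Finset.sum_congr rfl hdiff, Finset.sum_const, smul_eq_mul, mul_comm,
        Set.ncard_eq_toFinset_card]

theorem exists_mem_center_orderOf_eq_prime [Finite G] (hG : IsPGroup p G)
    {N : Subgroup G} [N.Normal] (hN : N ≠ ⊥) : ∃ z ∈ N, z ∈ center G ∧ orderOf z = p := by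
  have hdvd {H : Subgroup G} (hH : H ≠ ⊥) : p ∣ Nat.card H :=
    (hG.to_subgroup H).card_eq_or_dvd.resolve_left (mt card_eq_one.mp hH)
  obtain ⟨b, hb, hne⟩ :=
    (hG.of_equiv ConjAct.toConjAct).exists_fixed_point_of_prime_dvd_card_of_fixed_point
      N (hdvd hN) (a := 1) (fun g => smul_one g)
  have hbc : (b : G) ∈ center G := mem_center_iff.mpr fun g => by
    have hfix := congrArg Subtype.val (hb (ConjAct.toConjAct g))
    rw [ConjAct.Subgroup.val_conj_smul, ConjAct.toConjAct_smul] at hfix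
    exact mul_inv_eq_iff_eq_mul.mp hfix
  have hinf : N ⊓ center G ≠ ⊥ := fun h =>
    hne (Subtype.ext ((mem_bot.mp (h ▸ mem_inf.mpr ⟨b.2, hbc⟩)).symm))
  obtain ⟨⟨z, hzN, hzc⟩, hz⟩ := exists_prime_orderOf_dvd_card' p (hdvd hinf)
  exact ⟨z, hzN, hzc, (orderOf_mk z _).symm.trans hz⟩

end PGroup

theorem card_ker_comp_le {G H K : Type*} [Group G] [Group H] [Group K] [Finite H]
    (g : H →* K) (f : G →* H) :
    Nat.card (g.comp f).ker ≤ Nat.card g.ker * Nat.card f.ker := by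
  rw [← MonoidHom.comap_ker, mul_comm, ← relIndex_bot_left f.ker, ← relIndex_bot_left (comap f _),
    ← relIndex_mul_relIndex ⊥ f.ker _ bot_le (f.ker_le_comap _), relIndex_ker]
  exact Nat.mul_le_mul_left _ (card_le_of_le (map_comap_le f g.ker))

section CommGroup

variable {B : Type*} [CommGroup B] [Finite B]

theorem card_ker_powMonoidHom_pow_le {m : ℕ} (h : Nat.card (powMonoidHom m : B →* B).ker ≤ m)
    (k : ℕ) : Nat.card (powMonoidHom (m ^ k) : B →* B).ker ≤ m ^ k := by
  induction k with
  | zero => simp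
  | succ k ih =>
    have hcomp : (powMonoidHom (m ^ (k + 1)) : B →* B) =
        (powMonoidHom (m ^ k)).comp (powMonoidHom m) :=
      MonoidHom.ext fun b => (congrArg (b ^ ·) (pow_succ' m k)).trans (pow_mul b m (m ^ k))
    rw [hcomp, pow_succ]
    exact (card_ker_comp_le _ _).trans (Nat.mul_le_mul ih h)

theorem isCyclic_of_card_ker_powMonoidHom_le {p : ℕ} [Fact p.Prime] (hB : IsPGroup p B)
    (h : Nat.card (powMonoidHom p : B →* B).ker ≤ p) : IsCyclic B := by
  obtain ⟨k, hk⟩ := isPGroup_iff_exponent_eq_pow.mp hB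
  have hker : (powMonoidHom (p ^ k) : B →* B).ker = ⊤ :=
    top_le_iff.mp fun b _ => hk ▸ Monoid.pow_exponent_eq_one b
  have hle : Nat.card B ≤ Monoid.exponent B := by
    simpa only [hker, card_top, hk] using card_ker_powMonoidHom_pow_le h k
  exact IsCyclic.of_exponent_eq_card
    (le_antisymm (Nat.le_of_dvd Nat.card_pos Group.exponent_dvd_nat_card) hle)

end CommGroup

theorem isAntichain_setOf_card_eq (G : Type*) [Group G] [Finite G] (n : ℕ) :
    IsAntichain (· ≤ ·) {P : Subgroup G | Nat.card P = n} :=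
  fun _ hP _ hQ hne hle => hne (eq_of_le_of_card_ge hle (hQ.trans hP.symm).le)

section Thin

theorem IsThinPGroup.of_surjective {p : ℕ} {G H : Type*} [Group G] [Group H]
    (hG : IsThinPGroup p G) {f : G →* H} (hf : Function.Surjective f) : IsThinPGroup p H := by
  intro S hS hanti
  rw [← Set.ncard_image_of_injective S (comap_injective hf)]
  refine hG _ (Set.forall_mem_image.mpr fun N hN => (hS N hN).comap f) ?_
  rintro _ ⟨N, hN, rfl⟩ _ ⟨K, hK, rfl⟩ hne hle
  exact hanti hN hK (fun h => hne (congrArg _ h)) ((comap_le_comap_of_surjective hf).mp hle)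

variable {p : ℕ} [hp : Fact p.Prime] {B : Type*} [CommGroup B] [Finite B]

theorem IsThinPGroup.ncard_setOf_card_eq_le (hthin : IsThinPGroup p B)
    {x y : B} (hx : orderOf x = p ^ 2) (hy : y ^ p = 1) (hyx : y ∉ zpowers x) :
    {P : Subgroup B | Nat.card P = p}.ncard ≤ p := by
  have hp0 : p ≠ 0 := hp.out.ne_zero
  have hpow : (x * y) ^ p = x ^ p := by rw [mul_pow, hy, mul_one]
  have hxy : orderOf (x * y) = p ^ 2 := orderOf_eq_prime_sq_of_pow_eq hx hpow
  have hne : zpowers x ≠ zpowers (x * y) := fun h =>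
    hyx (((zpowers x).mul_mem_cancel_left (mem_zpowers x)).mp (h ▸ mem_zpowers (x * y)))
  set S := {P : Subgroup B | Nat.card P = p}
  have hlow : ∀ Q ∈ ({zpowers x, zpowers (x * y)} : Set (Subgroup B)),
      ∀ P ∈ S \ {zpowers (x ^ p)}, ¬ P ≤ Q := by
    rintro Q (rfl | rfl) P ⟨hP, hPx⟩ hle
    · exact hPx (eq_zpowers_pow_of_le_zpowers hp0 hp0 (hx.trans (sq p)) hP hle)
    · exact hPx (hpow ▸ eq_zpowers_pow_of_le_zpowers hp0 hp0 (hxy.trans (sq p)) hP hle)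
  have htop : ({zpowers x, zpowers (x * y)} : Set (Subgroup B)) ⊆ {P | Nat.card P = p ^ 2} := by
    rintro Q (rfl | rfl) <;> simp [hx, hxy]
  have hanti : IsAntichain (· ≤ ·)
      ({zpowers x, zpowers (x * y)} ∪ S \ {zpowers (x ^ p)}) := by
    refine isAntichain_union.mpr ⟨(isAntichain_setOf_card_eq B _).subset htop,
      (isAntichain_setOf_card_eq B p).subset Set.sdiff_subset,
      fun Q hQ P hP _ => ⟨fun hle => ?_, hlow Q hQ P hP⟩⟩
    have := Subgroup.card_le_of_le hle
    rw [htop hQ, hP.1, sq] at this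
    exact this.not_gt (lt_mul_self hp.out.one_lt)
  have hdisj : Disjoint {zpowers x, zpowers (x * y)} (S \ {zpowers (x ^ p)}) :=
    Set.disjoint_left.mpr fun Q hQ hQ' => hlow Q hQ Q hQ' le_rfl
  have hcard := hthin _ (fun _ _ => inferInstance) hanti
  rw [Set.ncard_union_eq hdisj, Set.ncard_pair hne] at hcard
  have := Set.ncard_le_ncard_sdiff_add_ncard S {zpowers (x ^ p)}
  rw [Set.ncard_singleton] at this
  omega

theorem IsThinPGroup.pow_prime_eq_one_of_not_isCyclic (hB : IsPGroup p B)
    (hthin : IsThinPGroup p B) (hcyc : ¬ IsCyclic B) (g : B) : g ^ p = 1 := by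
  by_contra hg
  set K := (powMonoidHom p : B →* B).ker
  have hlt : p < Nat.card K := not_le.mp fun h => hcyc (isCyclic_of_card_ker_powMonoidHom_le hB h)
  obtain ⟨x, hx⟩ := exists_orderOf_eq_prime_sq hB hg
  have hx' : orderOf x = p * p := hx.trans (sq p)
  obtain ⟨y, hy, hyx⟩ : ∃ y : B, y ^ p = 1 ∧ y ∉ zpowers x := by
    by_contra! h
    have hle : K ≤ zpowers (x ^ p) := fun y hy =>
      mem_zpowers_pow_of_pow_eq_one hp.out.ne_zero hx' (h y hy) hy
    refine hlt.not_ge ((card_le_of_le hle).trans ?_)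
    rw [Nat.card_zpowers, orderOf_pow_of_orderOf_eq_mul hp.out.ne_zero hx']
  obtain ⟨k, hk⟩ := IsPGroup.iff_card.mp (hB.to_subgroup K)
  have hk2 : 2 ≤ k := (Nat.pow_lt_pow_iff_right hp.out.one_lt).mp (by rwa [pow_one, ← hk])
  have hsq : p ^ 2 ≤ 1 + (p - 1) * p :=
    calc p ^ 2 ≤ p ^ k := Nat.pow_le_pow_right hp.out.pos hk2
      _ = {g : B | g ^ p = 1}.ncard := hk.symm.trans (Nat.card_coe_set_eq _)
      _ ≤ 1 + (p - 1) * {P : Subgroup B | Nat.card P = p}.ncard := ncard_setOf_pow_eq_one_le p B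
      _ ≤ 1 + (p - 1) * p := by gcongr; exact hthin.ncard_setOf_card_eq_le hx hy hyx
  obtain ⟨q, rfl⟩ := Nat.exists_eq_add_of_lt hp.out.one_lt
  simp only [Nat.add_sub_cancel] at hsq
  nlinarith

theorem IsThinPGroup.card_le_prime_sq_of_not_isCyclic (hB : IsPGroup p B)
    (hthin : IsThinPGroup p B) (hcyc : ¬ IsCyclic B) : Nat.card B ≤ p ^ 2 := by
  have hexp : {g : B | g ^ p = 1} = Set.univ :=
    Set.eq_univ_of_forall (hthin.pow_prime_eq_one_of_not_isCyclic hB hcyc)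
  calc Nat.card B = {g : B | g ^ p = 1}.ncard := by rw [hexp, Set.ncard_univ]
    _ ≤ 1 + (p - 1) * {P : Subgroup B | Nat.card P = p}.ncard := ncard_setOf_pow_eq_one_le p B
    _ ≤ 1 + (p - 1) * (p + 1) := by
      gcongr
      exact hthin _ (fun _ _ => inferInstance) (isAntichain_setOf_card_eq B p)
    _ = p ^ 2 := by
      obtain ⟨q, rfl⟩ := Nat.exists_eq_add_of_lt hp.out.pos
      simp only [Nat.add_sub_cancel]
      ring

theorem IsThinPGroup.index_commutator_le {G : Type*} [Group G] [Finite G]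
    (hthin : IsThinPGroup p G) (hG : IsPGroup p G) (hna : ¬ IsMulCommutative G) :
    (commutator G).index ≤ p ^ 2 := by
  have hnil : Group.IsNilpotent G := hG.isNilpotent
  have hsurj : Function.Surjective (Abelianization.of (G := G)) := QuotientGroup.mk_surjective
  have hcyc : ¬ IsCyclic (Abelianization G) := fun _ =>
    have : IsCyclic G := isCyclic_of_isCyclic_abelianization
    hna inferInstance
  have hthinAb : IsThinPGroup p (Abelianization G) := hthin.of_surjective hsurj
  have hcard : Nat.card (Abelianization G) ≤ p ^ 2 :=
    hthinAb.card_le_prime_sq_of_not_isCyclic (hG.of_surjective _ hsurj) hcyc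
  exact hcard

end Thin

section CommutatorHom

variable {G : Type*} [Group G] (A : Subgroup G) [hAn : A.Normal] [IsMulCommutative A]

/-- For an abelian normal subgroup `A` of `G`, the homomorphism `a ↦ ⁅a, y⁆` from `A` to `G`; when
`A` and `y` generate `G`, its range is the derived subgroup and its kernel is central in `G`. -/
def commutatorHom (y : G) : A →* G where
  toFun a := ⁅(a : G), y⁆
  map_one' := commutatorElement_one_left y
  map_mul' a b := by
    have hmem (c : A) : ⁅(c : G), y⁆ ∈ A :=
      commutator_le_left A ⊤ (commutator_mem_commutator c.2 (mem_top y))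
    calc ⁅(a * b : G), y⁆ = a * ⁅(b : G), y⁆ * (a : G)⁻¹ * ⁅(a : G), y⁆ :=
          commutatorElement_mul_left_eq_conj_mul _ _ _
      _ = ⁅(b : G), y⁆ * ⁅(a : G), y⁆ := by
          rw [setLike_mul_comm a.2 (hmem b), mul_inv_cancel_right]
      _ = ⁅(a : G), y⁆ * ⁅(b : G), y⁆ := setLike_mul_comm (hmem b) (hmem a)

theorem range_commutatorHom_le (y : G) : (commutatorHom A y).range ≤ A := by
  rintro _ ⟨a, rfl⟩
  exact commutator_le_left A ⊤ (commutator_mem_commutator a.2 (mem_top y))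

variable {A}

theorem conj_mem_range_commutatorHom_iff {y g : G} :
    y * g * y⁻¹ ∈ (commutatorHom A y).range ↔ g ∈ (commutatorHom A y).range := by
  have hconj (a : G) : ⁅y * a * y⁻¹, y⁆ = y * ⁅a, y⁆ * y⁻¹ := by
    rw [conjugate_commutatorElement, mul_inv_cancel_right]
  constructor
  · rintro ⟨a, ha⟩
    refine ⟨⟨y⁻¹ * a * y, hAn.conj_mem' a a.2 y⟩, ?_⟩
    rw [← mul_right_inj y, ← mul_left_inj y⁻¹, ← ha]
    refine (hconj _).symm.trans (congrArg (⁅·, y⁆) ?_)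
    group
  · rintro ⟨a, rfl⟩
    exact ⟨⟨y * a * y⁻¹, hAn.conj_mem a a.2 y⟩, hconj a⟩

theorem normal_range_commutatorHom {y : G} (hA : A ⊔ zpowers y = ⊤) :
    (commutatorHom A y).range.Normal := by
  rw [← normalizer_eq_top_iff, ← top_le_iff, ← hA, sup_le_iff, zpowers_le, mem_normalizer_iff]
  refine ⟨?_, fun g => conj_mem_range_commutatorHom_iff.symm⟩
  calc A ≤ centralizer A := A.le_centralizer
    _ ≤ centralizer (commutatorHom A y).range := centralizer_le (range_commutatorHom_le A y)
    _ ≤ _ := centralizer_le_normalizer _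

theorem commutator_eq_range_commutatorHom {y : G} (hA : A ⊔ zpowers y = ⊤) :
    commutator G = (commutatorHom A y).range := by
  have hN := normal_range_commutatorHom hA
  let π := QuotientGroup.mk' (commutatorHom A y).range
  refine le_antisymm (Normal.quotient_commutative_iff_commutator_le.mp ?_) ?_
  · have hcomm : A.map π ≤ centralizer (zpowers (π y)) := by
      rw [le_centralizer_iff, zpowers_le, mem_centralizer_iff]
      rintro _ ⟨a, ha, rfl⟩
      rw [← commutatorElement_eq_one_iff_mul_comm, ← map_commutatorElement]
      exact (QuotientGroup.eq_one_iff _).mpr ⟨⟨a, ha⟩, rfl⟩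
    have htop : A.map π ⊔ zpowers (π y) = ⊤ := by
      rw [← MonoidHom.map_zpowers, ← Subgroup.map_sup, hA,
        map_top_of_surjective π (QuotientGroup.mk'_surjective _)]
    exact isMulCommutative_of_sup_eq_top hcomm htop
  · rintro _ ⟨a, rfl⟩
    exact commutator_mem_commutator (mem_top _) (mem_top _)

theorem card_commutator_mul_card_ker_commutatorHom {y : G} (hA : A ⊔ zpowers y = ⊤) :
    Nat.card (commutator G) * Nat.card (commutatorHom A y).ker = Nat.card A := by
  rw [commutator_eq_range_commutatorHom hA, ← index_ker, mul_comm, card_mul_index]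

end CommutatorHom

section Center

variable {G : Type*} [Group G] {A : Subgroup G} [IsMulCommutative A]

theorem center_le_of_isCoatom (hA : IsCoatom A) (hG : ¬ IsMulCommutative G) : center G ≤ A := by
  intro c hc
  by_contra hcA
  have hcent : A ≤ centralizer (zpowers c) :=
    le_centralizer_of_le_center A (zpowers_le.mpr hc)
  exact hG (isMulCommutative_of_sup_eq_top hcent (sup_zpowers_eq_top_of_isCoatom hA hcA))

theorem card_center_le [Finite G] [A.Normal] {p : ℕ} [hp : Fact p.Prime] (hA : A.index = p)
    (hG' : (commutator G).index ≤ p ^ 2) (hG : ¬ IsMulCommutative G) :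
    Nat.card (center G) ≤ p := by
  have hcoatom : IsCoatom A := isCoatom_of_prime_index (hA ▸ hp.out)
  obtain ⟨y, -, hy⟩ := SetLike.exists_of_lt hcoatom.lt_top
  have hker : center G ≤ (commutatorHom A y).ker.map A.subtype := fun c hc =>
    ⟨⟨c, center_le_of_isCoatom hcoatom hG hc⟩,
      commutatorElement_eq_one_iff_mul_comm.mpr (mem_center_iff.mp hc y).symm, rfl⟩
  have hker_card : Nat.card (commutatorHom A y).ker * (Nat.card (commutator G) * p) ≤
      p * (Nat.card (commutator G) * p) :=
    calc Nat.card (commutatorHom A y).ker * (Nat.card (commutator G) * p)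
        = Nat.card A * A.index := by
          rw [← card_commutator_mul_card_ker_commutatorHom
            (sup_zpowers_eq_top_of_isCoatom hcoatom hy), hA]
          ring
      _ = Nat.card (commutator G) * (commutator G).index := by simp only [card_mul_index]
      _ ≤ Nat.card (commutator G) * p ^ 2 := Nat.mul_le_mul_left _ hG'
      _ = p * (Nat.card (commutator G) * p) := by ring
  calc Nat.card (center G)
      ≤ Nat.card ((commutatorHom A y).ker.map A.subtype) := card_le_of_le hker
    _ = Nat.card (commutatorHom A y).ker := card_map_of_injective A.subtype_injective
    _ ≤ p := Nat.le_of_mul_le_mul_right hker_card (Nat.mul_pos Nat.card_pos hp.out.pos)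

end Center

theorem index_commutator_le_of_surjective {G H : Type*} [Group G] [Group H] [Finite G]
    {f : G →* H} (hf : Function.Surjective f) : (commutator H).index ≤ (commutator G).index := by
  have hmap : (commutator G).map f = commutator H := by
    rw [map_commutator_eq, f.range_eq_top_of_surjective hf, commutator_def]
  rw [← hmap]
  exact Nat.le_of_dvd (Nat.pos_of_ne_zero FiniteIndex.index_ne_zero) (index_map_dvd _ hf)

theorem card_center_eq_of_index_eq_prime {p n : ℕ} [hp : Fact p.Prime] {G : Type*} [Group G]
    [Finite G] (hcard : Nat.card G = p ^ n) {A : Subgroup G} [A.Normal] [IsMulCommutative A]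
    (hA : A.index = p) (hG' : (commutator G).index ≤ p ^ 2) (hG : ¬ IsMulCommutative G) :
    Nat.card (center G) = p := by
  have hn : 0 < n := Nat.pos_of_ne_zero fun h => hG <| by
    have : Subsingleton G := Finite.card_le_one_iff_subsingleton.mp (by simp [hcard, h])
    infer_instance
  obtain ⟨k, hk, hcenter⟩ := IsPGroup.card_center_eq_prime_pow hcard hn
  exact le_antisymm (card_center_le hA hG' hG) (hcenter ▸ Nat.le_self_pow hk.ne' p)

theorem nilpotencyClass_eq_of_index_eq_prime {p n : ℕ} [hp : Fact p.Prime] {G : Type*} [Group G]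
    [Finite G] [Group.IsNilpotent G] (hcard : Nat.card G = p ^ (n + 2)) {A : Subgroup G}
    [IsMulCommutative A] (hA : A.index = p) (hG' : (commutator G).index ≤ p ^ 2) :
    Group.nilpotencyClass G = n + 1 := by
  have hnt : Nontrivial G :=
    Finite.one_lt_card_iff_nontrivial.mp (hcard ▸ Nat.one_lt_pow (by omega) hp.out.one_lt)
  induction n generalizing G with
  | zero =>
    have hcomm : IsMulCommutative G := IsPGroup.isMulCommutative_of_card_eq_prime_sq hcard
    refine le_antisymm (Group.IsNilpotent.nilpotencyClass_le_one_iff.mpr hcomm) ?_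
    rw [Group.nilpotencyClass_eq_quotient_center_plus_one]
    exact Nat.le_add_left _ _
  | succ n ih =>
    have hG : ¬ IsMulCommutative G := fun h => by
      rw [(commutator_eq_bot_iff G).mpr h, index_bot, hcard] at hG'
      exact hG'.not_gt (Nat.pow_lt_pow_right hp.out.one_lt (by omega))
    have hcoatom : IsCoatom A := isCoatom_of_prime_index (hA ▸ hp.out)
    have hAn : A.Normal := normal_of_isCoatom hcoatom
    let π := QuotientGroup.mk' (center G)
    have hπ : Function.Surjective π := QuotientGroup.mk'_surjective (center G)
    have hcardQ : Nat.card (G ⧸ center G) = p ^ (n + 2) := by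
      refine Nat.eq_of_mul_eq_mul_right hp.out.pos ?_
      rw [← pow_succ, ← hcard, card_eq_card_quotient_mul_card_subgroup (center G),
        card_center_eq_of_index_eq_prime hcard hA hG' hG]
    have hAQ : (A.map π).index = p := by
      have hker : π.ker ≤ A :=
        (QuotientGroup.ker_mk' _).trans_le (center_le_of_isCoatom hcoatom hG)
      rw [index_map_eq A hπ hker, hA]
    have hQ' : (commutator (G ⧸ center G)).index ≤ p ^ 2 :=
      (index_commutator_le_of_surjective hπ).trans hG'
    have hntQ : Nontrivial (G ⧸ center G) :=
      Finite.one_lt_card_iff_nontrivial.mp (hcardQ ▸ Nat.one_lt_pow (by omega) hp.out.one_lt)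
    rw [Group.nilpotencyClass_eq_quotient_center_plus_one, ih hcardQ hAQ hQ' hntQ]

section Taussky

variable {G : Type*} [Group G]

theorem commutator_eq_zpowers_commutatorElement {x y z : G} (hz : z ∈ center G)
    [(zpowers x ⊔ zpowers z).Normal] (hy : zpowers x ⊔ zpowers z ⊔ zpowers y = ⊤) :
    commutator G = zpowers ⁅x, y⁆ := by
  have hzZ : zpowers z ≤ center G := zpowers_le.mpr hz
  have hzn : (zpowers z).Normal := normal_of_le_center hzZ
  have hcomm : IsMulCommutative ↥(zpowers x ⊔ zpowers z) :=
    isMulCommutative_sup (le_centralizer_of_le_center _ hzZ)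
  refine le_antisymm ?_ (zpowers_le.mpr (commutator_mem_commutator (mem_top x) (mem_top y)))
  rw [commutator_eq_range_commutatorHom hy]
  rintro _ ⟨⟨a, ha⟩, rfl⟩
  obtain ⟨_, ⟨i, rfl⟩, c, hc, rfl⟩ := mem_sup_of_normal_right.mp ha
  have hc1 : ⁅c, y⁆ = 1 :=
    commutatorElement_eq_one_iff_mul_comm.mpr (mem_center_iff.mp (hzZ hc) y).symm
  refine ⟨i, ?_⟩
  calc ⁅x, y⁆ ^ i = ⁅x ^ i, y⁆ :=
      (map_zpow (commutatorHom (zpowers x ⊔ zpowers z) y)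
        ⟨x, mem_sup_left (mem_zpowers x)⟩ i).symm
    _ = ⁅x ^ i * c, y⁆ := by
      rw [commutatorElement_mul_left_eq_conj_mul, hc1, mul_one, mul_inv_cancel, one_mul]

theorem mem_zpowers_of_index_sup_eq_prime {p : ℕ} [hp : Fact p.Prime] [Finite G]
    (hG : IsPGroup p G) {x z : G} (hz : z ∈ center G) (hzp : z ^ p = 1) (hzG : z ∈ commutator G)
    (hle : ¬ commutator G ≤ zpowers z) (hidx : (zpowers x ⊔ zpowers z).index = p) :
    z ∈ zpowers x := by
  have hnil : Group.IsNilpotent G := hG.isNilpotent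
  have hcoatom : IsCoatom (zpowers x ⊔ zpowers z) := isCoatom_of_prime_index (hidx ▸ hp.out)
  have hn := normal_of_isCoatom hcoatom
  have hzn : (zpowers z).Normal := normal_of_le_center (zpowers_le.mpr hz)
  obtain ⟨y, -, hy⟩ := SetLike.exists_of_lt hcoatom.lt_top
  have hG' : commutator G = zpowers ⁅x, y⁆ :=
    commutator_eq_zpowers_commutatorElement hz (sup_zpowers_eq_top_of_isCoatom hcoatom hy)
  have hzw : z ∈ zpowers (⁅x, y⁆ ^ p) :=
    (zpowers_eq_or_mem_zpowers_pow hG (hG' ▸ hzG)).resolve_left fun h => hle (hG'.trans h.symm).le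
  have hmem : ⁅x, y⁆ ∈ zpowers x ⊔ zpowers z := commutator_le_left _ ⊤
    (commutator_mem_commutator (mem_sup_left (mem_zpowers x)) (mem_top y))
  obtain ⟨b, hb, c, hc, hbc⟩ := mem_sup_of_normal_right.mp hmem
  have hcp : c ^ p = 1 := by
    obtain ⟨j, rfl⟩ := hc
    rw [← zpow_natCast, zpow_comm, zpow_natCast, hzp, one_zpow]
  have hwp : ⁅x, y⁆ ^ p = b ^ p := by
    rw [← hbc, Commute.mul_pow (mem_center_iff.mp (zpowers_le.mpr hz hc) b), hcp, mul_one]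
  exact zpowers_le.mpr (hwp ▸ pow_mem hb p) hzw

theorem exists_index_zpowers_eq_two_of_card_le [Finite G] (hG : IsPGroup 2 G)
    (hcard : Nat.card G ≤ 8) (hna : ¬ IsMulCommutative G) : ∃ x : G, (zpowers x).index = 2 := by
  obtain ⟨g, hg⟩ : ∃ g : G, g ^ 2 ≠ 1 := by
    by_contra! h
    exact hna ⟨⟨Commute.of_orderOf_dvd_two fun c => orderOf_dvd_of_pow_eq_one (h c)⟩⟩
  obtain ⟨x, hx⟩ := exists_orderOf_eq_prime_sq hG hg
  refine ⟨x, ?_⟩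
  have hne : (zpowers x).index ≠ 1 := fun h =>
    have : IsCyclic G := isCyclic_iff_exists_zpowers_eq_top.mpr ⟨x, index_eq_one.mp h⟩
    hna inferInstance
  have hmul := (zpowers x).card_mul_index
  rw [Nat.card_zpowers, hx] at hmul
  have := (zpowers x).index_ne_zero_of_finite
  omega

theorem exists_index_zpowers_eq_two [Finite G] (hG : IsPGroup 2 G)
    (hG' : (commutator G).index ≤ 4) (hna : ¬ IsMulCommutative G) :
    ∃ x : G, (zpowers x).index = 2 := by
  induction hcard : Nat.card G using Nat.strong_induction_on generalizing G with
  | _ k ih =>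
  subst hcard
  obtain ⟨z, hzG, hzc, hz⟩ := exists_mem_center_orderOf_eq_prime hG
    (mt (commutator_eq_bot_iff G).mp hna)
  have hzn : (zpowers z).Normal := normal_of_le_center (zpowers_le.mpr hzc)
  have hzcard : Nat.card (zpowers z) = 2 := (Nat.card_zpowers z).trans hz
  by_cases hle : commutator G ≤ zpowers z
  · refine exists_index_zpowers_eq_two_of_card_le hG ?_ hna
    calc Nat.card G = Nat.card (commutator G) * (commutator G).index := (card_mul_index _).symm
      _ ≤ 2 * 4 := Nat.mul_le_mul (hzcard ▸ card_le_of_le hle) hG'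
  let π := QuotientGroup.mk' (zpowers z)
  have hπ : Function.Surjective π := QuotientGroup.mk'_surjective (zpowers z)
  have hlt : Nat.card (G ⧸ zpowers z) < Nat.card G := by
    rw [card_eq_card_quotient_mul_card_subgroup (zpowers z), hzcard]
    exact lt_mul_of_one_lt_right Nat.card_pos one_lt_two
  obtain ⟨xQ, hxQ⟩ := ih _ hlt (hG.to_quotient _)
    ((index_commutator_le_of_surjective hπ).trans hG')
    (mt Normal.quotient_commutative_iff_commutator_le.mp hle) rfl
  obtain ⟨x, rfl⟩ := hπ xQ
  have hidx : (zpowers x ⊔ zpowers z).index = 2 := by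
    rw [← hxQ, ← index_comap_of_surjective _ hπ, ← MonoidHom.map_zpowers, comap_map_eq,
      QuotientGroup.ker_mk']
  have hzx : z ∈ zpowers x :=
    mem_zpowers_of_index_sup_eq_prime hG hzc (hz ▸ pow_orderOf_eq_one z) hzG hle hidx
  exact ⟨x, by rwa [sup_eq_left.mpr (zpowers_le.mpr hzx)] at hidx⟩

theorem nilpotencyClass_eq_of_index_commutator_le_four {n : ℕ} [Finite G] [Group.IsNilpotent G]
    (hcard : Nat.card G = 2 ^ n) (hG' : (commutator G).index ≤ 4) (hna : ¬ IsMulCommutative G) :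
    Group.nilpotencyClass G = n - 1 := by
  obtain ⟨x, hx⟩ := exists_index_zpowers_eq_two (IsPGroup.of_card hcard) hG' hna
  have hn : 2 ≤ n := by
    by_contra! hlt
    have : IsCyclic G := isCyclic_of_card_dvd_prime (p := 2)
      (hcard ▸ pow_dvd_pow 2 (Nat.le_of_lt_succ hlt))
    exact hna inferInstance
  obtain ⟨m, rfl⟩ := Nat.exists_eq_add_of_le' hn
  exact nilpotencyClass_eq_of_index_eq_prime hcard hx hG'

end Taussky

/-- Every nonabelian finite thin `2`-group is of maximal class: if `|G| = 2 ^ n`, then the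
nilpotency class of `G` is `n - 1`. -/
theorem thin_two_group_is_maximal_class
    {n : ℕ} {G : Type*} [Group G] [Finite G] [Group.IsNilpotent G]
    (h2G : IsPGroup 2 G) (hthin : IsThinPGroup 2 G)
    (hna : ∃ a b : G, a * b ≠ b * a)
    (hcard : Nat.card G = 2 ^ n) :
    Group.nilpotencyClass G = n - 1 := by
  have hG : ¬ IsMulCommutative G := fun _ =>
    let ⟨a, b, hab⟩ := hna
    hab (mul_comm' a b)
  have hG' : (commutator G).index ≤ 4 := hthin.index_commutator_le h2G hG
  exact nilpotencyClass_eq_of_index_commutator_le_four hcard hG' hG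
end
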